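/- arXiv:2006.03139 — 5 statements merged into one kernel-verified Lean document; each statement's English description precedes it below -/
import Mathlib

section
/- Let n ≥ 3 and let ρ and σ be density matrices on ℂ^n. Suppose that for every context (P_1,…,P_k) on ℂ^n the contextual entropies of ρ and σ coincide, i.e. Sh(Tr(ρP_1),…,Tr(ρP_k)) = Sh(Tr(σP_1),…,Tr(σP_k)). Then ρ = σ. (In other words, for n ≥ 3 the contextual entropy map is injective on density matrices, so a quantum state can be reconstructed from its contextual entropy.) -/
/-!
A context `(P, 1 - P)` carries only a binary entropy, and the binary entropies of `p` and `q` agree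
exactly when `p = q` or `p + q = 1`. Taking for `P` the projection onto the line of a unit vector
`x`, the hypothesis becomes `⟨x, (ρ - σ) x⟩ * ⟨x, (ρ + σ - 1) x⟩ = 0`. Along a real line `x + t y`
both factors are polynomials in `t`, so one of the two forms vanishes identically: `ρ = σ` or
`ρ + σ = 1`. Comparing traces, the second alternative forces `n = 2`, where it does occur.
-/

open Matrix ComplexOrder

/-- Shannon entropy of a (finitely indexed) probability vector, with the
convention `0 * log 0 = 0` (automatic since `Real.log 0 = 0`). -/
noncomputable def Sh {ι : Type*} [Fintype ι] (p : ι → ℝ) : ℝ :=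
  -∑ i, p i * Real.log (p i)

/-- A density matrix: positive semidefinite with trace 1. -/
def IsDensityMatrix {ι : Type*} [Fintype ι] [DecidableEq ι]
    (ρ : Matrix ι ι ℂ) : Prop :=
  ρ.PosSemidef ∧ ρ.trace = 1

/-- A context: a finite family of nonzero pairwise orthogonal projections
summing to the identity. -/
def IsContext {ι N : Type*} [Fintype ι] [Fintype N] [DecidableEq N]
    (P : ι → Matrix N N ℂ) : Prop :=
  (∀ i, P i ≠ 0) ∧ (∀ i, (P i)ᴴ = P i) ∧ (∀ i, P i * P i = P i) ∧
    (∀ i j, i ≠ j → P i * P j = 0) ∧ (∑ i, P i = 1)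

section BinaryEntropy

open Set Real

lemma binEntropy_eq_binEntropy_iff {p q : ℝ} (hp : p ∈ Icc 0 1) (hq : q ∈ Icc 0 1) :
    binEntropy p = binEntropy q ↔ p = q ∨ p + q = 1 := by
  have binEntropy_min (r : ℝ) : binEntropy (min r (1 - r)) = binEntropy r := by
    rcases min_choice r (1 - r) with h | h <;> simp [h]
  have min_mem {r : ℝ} (hr : r ∈ Icc 0 1) : min r (1 - r) ∈ Icc 0 2⁻¹ := by
    grind
  rw [← binEntropy_min p, ← binEntropy_min q,
    binEntropy_strictMonoOn.injOn.eq_iff (min_mem hp) (min_mem hq)]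
  grind

lemma Sh_fin_two_eq_binEntropy {p : Fin 2 → ℝ} (hp : p 0 + p 1 = 1) :
    Sh p = binEntropy (p 0) := by
  rw [Sh, Fin.sum_univ_two, binEntropy_eq_negMulLog_add_negMulLog_one_sub,
    ← eq_sub_of_add_eq' hp, negMulLog, negMulLog]
  ring

end BinaryEntropy

section InnerProductSpace

open Polynomial in
lemma exists_polynomial_eval_eq_inner_map_self {𝕜 V : Type*} [RCLike 𝕜] [SeminormedAddCommGroup V]
    [InnerProductSpace 𝕜 V] (T : V →ₗ[𝕜] V) (x y : V) :
    ∃ p : 𝕜[X], p.coeff 0 = inner 𝕜 x (T x) ∧ p.coeff 2 = inner 𝕜 y (T y) ∧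
      ∀ t : ℝ, p.eval (t : 𝕜) = inner 𝕜 (x + (t : 𝕜) • y) (T (x + (t : 𝕜) • y)) := by
  refine ⟨C (inner 𝕜 x (T x)) + C (inner 𝕜 x (T y) + inner 𝕜 y (T x)) * X
    + C (inner 𝕜 y (T y)) * X ^ 2, ?_, ?_, fun t => ?_⟩
  · simp
  · simp
  · simp only [eval_add, eval_mul, eval_C, eval_X, eval_pow, map_add, map_smul, inner_add_left,
      inner_add_right, inner_smul_left, inner_smul_right, RCLike.conj_ofReal]
    ring

variable {V : Type*} [NormedAddCommGroup V] [InnerProductSpace ℂ V] {S T : V →ₗ[ℂ] V}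

lemma eq_zero_or_eq_zero_of_inner_map_self_mul_eq_zero
    (h : ∀ x, inner ℂ x (S x) * inner ℂ x (T x) = 0) : S = 0 ∨ T = 0 := by
  by_contra! ⟨hS, hT⟩
  obtain ⟨x, hx⟩ : ∃ x, inner ℂ x (S x) ≠ 0 := by
    contrapose! hS
    exact (inner_map_self_eq_zero S).mp fun x => inner_eq_zero_symm.mp (hS x)
  obtain ⟨y, hy⟩ : ∃ y, inner ℂ y (T y) ≠ 0 := by
    contrapose! hT
    exact (inner_map_self_eq_zero T).mp fun y => inner_eq_zero_symm.mp (hT y)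
  obtain ⟨p, hp_coeff, -, hp_eval⟩ := exists_polynomial_eval_eq_inner_map_self S x y
  obtain ⟨q, -, hq_coeff, hq_eval⟩ := exists_polynomial_eval_eq_inner_map_self T x y
  have hpq : p * q = 0 := by
    refine Polynomial.eq_zero_of_infinite_isRoot _ <|
      (Set.infinite_range_of_injective (RCLike.ofReal_injective (K := ℂ))).mono ?_
    rintro _ ⟨t, rfl⟩
    simpa only [Set.mem_ofPred_eq, Polynomial.IsRoot, Polynomial.eval_mul, hp_eval, hq_eval]
      using h _
  rcases mul_eq_zero.mp hpq with rfl | rfl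
  · exact hx (by simpa using hp_coeff.symm)
  · exact hy (by simpa using hq_coeff.symm)

lemma eq_zero_or_eq_zero_of_inner_map_self_mul_eq_zero_of_norm_eq_one
    (h : ∀ x, ‖x‖ = 1 → inner ℂ x (S x) * inner ℂ x (T x) = 0) : S = 0 ∨ T = 0 := by
  refine eq_zero_or_eq_zero_of_inner_map_self_mul_eq_zero fun x => ?_
  rcases eq_or_ne x 0 with rfl | hx
  · simp
  simpa [inner_smul_left, inner_smul_right, hx] using h _ (norm_smul_inv_norm (𝕜 := ℂ) hx)

end InnerProductSpace

section Matrix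

variable {𝕜 N : Type*} [RCLike 𝕜] [Fintype N]

open MatrixOrder Norms.L2Operator in
lemma trace_mul_nonneg {A B : Matrix N N 𝕜} (hA : A.PosSemidef) (hB : B.PosSemidef) :
    0 ≤ (A * B).trace := by
  classical
  obtain ⟨C, rfl⟩ : ∃ C, B = Cᴴ * C := CStarAlgebra.nonneg_iff_eq_star_mul_self.mp hB.nonneg
  rw [← Matrix.mul_assoc, trace_mul_comm, ← Matrix.mul_assoc]
  exact (hA.mul_mul_conjTranspose_same C).trace_nonneg

lemma isStarProjection_vecMulVec_star {x : EuclideanSpace 𝕜 N} (hx : ‖x‖ = 1) :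
    IsStarProjection (vecMulVec x.ofLp (star x.ofLp)) where
  isIdempotentElem := by
    rw [IsIdempotentElem, vecMulVec_mul_vecMulVec, dotProduct_comm,
      ← EuclideanSpace.inner_eq_star_dotProduct, inner_self_eq_norm_sq_to_K, hx]
    simp
  isSelfAdjoint := by
    simp [isSelfAdjoint_iff, star_eq_conjTranspose, conjTranspose_vecMulVec]

variable [DecidableEq N]

lemma isContext_self_one_sub {P : Matrix N N ℂ} (hP : IsStarProjection P) (hP_zero : P ≠ 0)
    (hP_one : P ≠ 1) : IsContext ![P, 1 - P] := by
  refine ⟨?_, ?_, ?_, ?_, ?_⟩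
  · simpa [Fin.forall_fin_two, sub_eq_zero] using ⟨hP_zero, hP_one.symm⟩
  · simpa [Fin.forall_fin_two, ← star_eq_conjTranspose] using hP.isSelfAdjoint.star_eq
  · simpa [Fin.forall_fin_two] using ⟨hP.isIdempotentElem.eq, hP.one_sub.isIdempotentElem.eq⟩
  · simpa [Fin.forall_fin_two] using ⟨hP.mul_one_sub_self, hP.one_sub_mul_self⟩
  · simp

lemma trace_mul_vecMulVec_star (A : Matrix N N 𝕜) (x : EuclideanSpace 𝕜 N) :
    (A * vecMulVec x.ofLp (star x.ofLp)).trace = inner 𝕜 x (toEuclideanLin A x) := by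
  rw [mul_vecMulVec, trace_vecMulVec, EuclideanSpace.inner_eq_star_dotProduct,
    ofLp_toLpLin, toLin'_apply]

end Matrix

namespace IsDensityMatrix

variable {N : Type*} [Fintype N] [DecidableEq N] {ρ σ P : Matrix N N ℂ}

lemma trace_mul_one_sub (hρ : IsDensityMatrix ρ) (P : Matrix N N ℂ) :
    (ρ * (1 - P)).trace = 1 - (ρ * P).trace := by
  rw [Matrix.mul_sub, Matrix.mul_one, trace_sub, hρ.2]

lemma trace_mul_mem_Icc (hρ : IsDensityMatrix ρ) (hP : IsStarProjection P) :
    (ρ * P).trace ∈ Set.Icc 0 1 := by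
  open MatrixOrder in
  constructor
  · exact trace_mul_nonneg hρ.1 hP.nonneg.posSemidef
  · rw [← sub_nonneg, ← hρ.trace_mul_one_sub]
    exact trace_mul_nonneg hρ.1 hP.one_sub.nonneg.posSemidef

lemma exists_trace_mul_eq_ofReal (hρ : IsDensityMatrix ρ) (hP : IsStarProjection P) :
    ∃ p ∈ Set.Icc (0 : ℝ) 1, (ρ * P).trace = p := by
  obtain ⟨h_nonneg, h_le_one⟩ := hρ.trace_mul_mem_Icc hP
  obtain ⟨p, hp⟩ : ∃ p : ℝ, (ρ * P).trace = p := ⟨_, Complex.eq_re_of_ofReal_le h_nonneg⟩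
  rw [hp] at h_nonneg h_le_one
  exact ⟨p, ⟨by exact_mod_cast h_nonneg, by exact_mod_cast h_le_one⟩, hp⟩

lemma Sh_trace_mul_self_one_sub (hρ : IsDensityMatrix ρ) (P : Matrix N N ℂ) :
    Sh (fun i => (ρ * ![P, 1 - P] i).trace.re) = Real.binEntropy (ρ * P).trace.re :=
  Sh_fin_two_eq_binEntropy (by simp [hρ.trace_mul_one_sub])

lemma trace_mul_eq_or_add_eq_one (hρ : IsDensityMatrix ρ) (hσ : IsDensityMatrix σ)
    (h : ∀ P : Fin 2 → Matrix N N ℂ, IsContext P →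
      Sh (fun i => (ρ * P i).trace.re) = Sh (fun i => (σ * P i).trace.re))
    (hP : IsStarProjection P) :
    (ρ * P).trace = (σ * P).trace ∨ (ρ * P).trace + (σ * P).trace = 1 := by
  rcases eq_or_ne P 0 with rfl | hP_zero
  · simp
  rcases eq_or_ne P 1 with rfl | hP_one
  · simp [hρ.2, hσ.2]
  have h_entropy : Real.binEntropy (ρ * P).trace.re = Real.binEntropy (σ * P).trace.re := by
    rw [← hρ.Sh_trace_mul_self_one_sub, ← hσ.Sh_trace_mul_self_one_sub]
    exact h _ (isContext_self_one_sub hP hP_zero hP_one)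
  obtain ⟨p, hp_mem, hp⟩ := hρ.exists_trace_mul_eq_ofReal hP
  obtain ⟨q, hq_mem, hq⟩ := hσ.exists_trace_mul_eq_ofReal hP
  rw [hp, hq] at h_entropy ⊢
  exact_mod_cast (binEntropy_eq_binEntropy_iff hp_mem hq_mem).mp h_entropy

lemma eq_or_add_eq_one (hρ : IsDensityMatrix ρ) (hσ : IsDensityMatrix σ)
    (h : ∀ P : Fin 2 → Matrix N N ℂ, IsContext P →
      Sh (fun i => (ρ * P i).trace.re) = Sh (fun i => (σ * P i).trace.re)) :
    ρ = σ ∨ ρ + σ = 1 := by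
  have h_forms : toEuclideanLin (ρ - σ) = 0 ∨ toEuclideanLin (ρ + σ - 1) = 0 := by
    refine eq_zero_or_eq_zero_of_inner_map_self_mul_eq_zero_of_norm_eq_one fun x hx => ?_
    have hP := isStarProjection_vecMulVec_star hx
    have hP_trace : (1 * vecMulVec x.ofLp (star x.ofLp)).trace = 1 := by
      rw [trace_mul_vecMulVec_star]
      simp [hx]
    rw [← trace_mul_vecMulVec_star, ← trace_mul_vecMulVec_star, Matrix.sub_mul, Matrix.sub_mul,
      Matrix.add_mul, trace_sub, trace_sub, trace_add, hP_trace, mul_eq_zero,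
      sub_eq_zero, sub_eq_zero]
    exact hρ.trace_mul_eq_or_add_eq_one hσ h hP
  simpa only [LinearEquiv.map_eq_zero_iff, sub_eq_zero] using h_forms

end IsDensityMatrix

theorem contextual_entropy_injective_general {N : Type*} [Fintype N] [DecidableEq N]
    (hN : Fintype.card N ≠ 2) {ρ σ : Matrix N N ℂ}
    (hρ : IsDensityMatrix ρ) (hσ : IsDensityMatrix σ)
    (h : ∀ P : Fin 2 → Matrix N N ℂ, IsContext P →
      Sh (fun i => (ρ * P i).trace.re) = Sh (fun i => (σ * P i).trace.re)) :
    ρ = σ := by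
  refine (hρ.eq_or_add_eq_one hσ h).resolve_right fun h_add => hN ?_
  have h_trace : (1 + 1 : ℂ) = Fintype.card N := by
    simpa only [trace_add, hρ.2, hσ.2, trace_one] using congrArg trace h_add
  exact_mod_cast h_trace.symm.trans one_add_one_eq_two

/-- for `n ≥ 3`, a density matrix on `ℂ^n` is determined by its
contextual entropy, i.e. by the Shannon entropies of the probability
distributions it induces in all contexts. -/
theorem contextual_entropy_injective (n : ℕ) (hn : 3 ≤ n)
    (ρ σ : Matrix (Fin n) (Fin n) ℂ)
    (hρ : IsDensityMatrix ρ) (hσ : IsDensityMatrix σ)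
    (h : ∀ (k : ℕ) (P : Fin k → Matrix (Fin n) (Fin n) ℂ), IsContext P →
      Sh (fun i => ((ρ * P i).trace).re) = Sh (fun i => ((σ * P i).trace).re)) :
    ρ = σ := by
  exact contextual_entropy_injective_general (by rw [Fintype.card_fin]; omega) hρ hσ (h 2)
end

section
/- For every density matrix ρ on ℂ^n, the von Neumann entropy of ρ equals the minimum over all unitary matrices U ∈ U(n) of the Shannon entropy of the diagonal of UρU*: VN(ρ) = min_{U ∈ U(n)} Sh((UρU*)_{11},…,(UρU*)_{nn}), and this minimum is attained (e.g. at any unitary U for which UρU* is diagonal). -/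
/-!
Write `ρ = V diag(λ) V*` with `V` unitary. For a unitary `U`, put `W = U V`: the diagonal of
`U ρ U*` is the image of `λ` under the matrix `|W i j|²`, which is doubly stochastic. Jensen's
inequality along each row, summed over the rows, shows that averaging by a doubly stochastic matrix
can only increase the sum of a concave function, in particular the entropy. If `U ρ U*` is
diagonal, comparing characteristic polynomials shows that its diagonal is `λ` up to order, so that
the entropies agree.
-/

open Matrix ComplexOrder

theorem sh_eq_sum_negMulLog {ι : Type*} [Fintype ι] (p : ι → ℝ) :
    Sh p = ∑ i, Real.negMulLog (p i) := by
  simp only [Sh, Real.negMulLog_eq_neg, Finset.sum_neg_distrib]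

theorem sh_eq_of_map_eq {ι κ : Type*} [Fintype ι] [Fintype κ] {p : ι → ℝ} {q : κ → ℝ}
    (h : Finset.univ.val.map p = Finset.univ.val.map q) : Sh p = Sh q := by
  have hsum := congrArg (fun s => (s.map Real.negMulLog).sum) h
  simp only [Multiset.map_map] at hsum
  rw [sh_eq_sum_negMulLog, sh_eq_sum_negMulLog]
  exact hsum

section DoublyStochastic

variable {n : Type*} [Fintype n] [DecidableEq n]

theorem sum_comp_le_sum_comp_mulVec_of_mem_doublyStochastic {R β : Type*}
    [Field R] [LinearOrder R] [IsStrictOrderedRing R] [AddCommGroup β] [PartialOrder β]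
    [IsOrderedAddMonoid β] [Module R β] [IsStrictOrderedModule R β]
    {s : Set R} {f : R → β} (hf : ConcaveOn R s f) {M : Matrix n n R}
    (hM : M ∈ doublyStochastic R n) {v : n → R} (hv : ∀ j, v j ∈ s) :
    ∑ j, f (v j) ≤ ∑ i, f ((M *ᵥ v) i) :=
  calc ∑ j, f (v j)
      = ∑ j, ∑ i, M i j • f (v j) := by
        simp only [← Finset.sum_smul, sum_col_of_mem_doublyStochastic hM, one_smul]
    _ = ∑ i, ∑ j, M i j • f (v j) := Finset.sum_comm
    _ ≤ ∑ i, f ((M *ᵥ v) i) := Finset.sum_le_sum fun i _ =>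
        hf.le_map_sum (fun _ _ => nonneg_of_mem_doublyStochastic hM)
          (sum_row_of_mem_doublyStochastic hM i) fun j _ => hv j

variable {𝕜 : Type*} [RCLike 𝕜]

theorem map_norm_sq_mem_doublyStochastic (U : unitaryGroup n 𝕜) :
    (U : Matrix n n 𝕜).map (‖·‖ ^ 2) ∈ doublyStochastic ℝ n := by
  refine mem_doublyStochastic_iff_sum.2 ⟨fun i j => sq_nonneg _, fun i => ?_, fun j => ?_⟩
  · have hrow := congrFun₂ (Unitary.coe_mul_star_self U) i i
    simp only [Unitary.coe_star, mul_apply, star_apply, one_apply_eq, RCLike.star_def,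
      RCLike.mul_conj] at hrow
    exact_mod_cast hrow
  · have hcol := congrFun₂ (Unitary.coe_star_mul_self U) j j
    simp only [mul_apply, star_apply, one_apply_eq, RCLike.star_def, RCLike.conj_mul] at hcol
    exact_mod_cast hcol

end DoublyStochastic

section Conjugation

theorem mul_diagonal_ofReal_mul_conjTranspose_apply_self {𝕜 m n : Type*} [RCLike 𝕜] [Fintype n]
    [DecidableEq n] (M : Matrix m n 𝕜) (v : n → ℝ) (i : m) :
    (M * (diagonal (RCLike.ofReal ∘ v) : Matrix n n 𝕜) * Mᴴ) i i =
      ((M.map (‖·‖ ^ 2) *ᵥ v) i : ℝ) := by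
  rw [mul_apply]
  simp only [mul_diagonal, conjTranspose_apply, RCLike.star_def, mul_right_comm, RCLike.mul_conj,
    mulVec, dotProduct, map_apply, Function.comp_apply]
  push_cast
  rfl

theorem roots_charpoly_of_isDiag {R n : Type*} [CommRing R] [IsDomain R] [Fintype n]
    [DecidableEq n] {A : Matrix n n R} (hA : A.IsDiag) :
    A.charpoly.roots = Finset.univ.val.map A.diag := by
  conv_lhs => rw [← hA.diagonal_diag, charpoly_diagonal]
  simpa only [Multiset.map_map, Function.comp_def, Finset.prod_map_val] using
    Polynomial.roots_multiset_prod_X_sub_C (Finset.univ.val.map A.diag)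

theorem charpoly_unitary_conj {R n : Type*} [CommRing R] [StarRing R] [Fintype n]
    [DecidableEq n] (U : unitaryGroup n R) (A : Matrix n n R) :
    ((U : Matrix n n R) * A * (U : Matrix n n R)ᴴ).charpoly = A.charpoly := by
  rw [charpoly_mul_comm, ← Matrix.mul_assoc, ← star_eq_conjTranspose, Unitary.coe_star_mul_self,
    Matrix.one_mul]

variable {𝕜 n : Type*} [RCLike 𝕜] [Fintype n] [DecidableEq n] {A : Matrix n n 𝕜}

theorem conj_eq_conj_diagonal_eigenvalues {m : Type*} (hA : A.IsHermitian) (M : Matrix m n 𝕜) :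
    M * A * Mᴴ = (M * (hA.eigenvectorUnitary : Matrix n n 𝕜)) *
      (diagonal (RCLike.ofReal ∘ hA.eigenvalues) : Matrix n n 𝕜) *
      (M * (hA.eigenvectorUnitary : Matrix n n 𝕜))ᴴ := by
  conv_lhs => rw [hA.spectral_theorem, Unitary.conjStarAlgAut_apply]
  simp only [conjTranspose_mul, Matrix.mul_assoc, star_eq_conjTranspose]

theorem sum_comp_eigenvalues_le_sum_comp_re_diag_conj {β : Type*} [AddCommGroup β]
    [PartialOrder β] [IsOrderedAddMonoid β] [Module ℝ β] [IsStrictOrderedModule ℝ β]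
    (hA : A.IsHermitian) {s : Set ℝ} {f : ℝ → β} (hf : ConcaveOn ℝ s f)
    (hs : ∀ i, hA.eigenvalues i ∈ s) (U : unitaryGroup n 𝕜) :
    ∑ i, f (hA.eigenvalues i) ≤
      ∑ i, f (RCLike.re (((U : Matrix n n 𝕜) * A * (U : Matrix n n 𝕜)ᴴ) i i)) := by
  simp only [conj_eq_conj_diagonal_eigenvalues hA,
    mul_diagonal_ofReal_mul_conjTranspose_apply_self, RCLike.ofReal_re]
  exact sum_comp_le_sum_comp_mulVec_of_mem_doublyStochastic hf
    (map_norm_sq_mem_doublyStochastic (U * hA.eigenvectorUnitary)) hs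

theorem map_re_diag_conj_eq_map_eigenvalues (hA : A.IsHermitian) (U : unitaryGroup n 𝕜)
    (hU : ((U : Matrix n n 𝕜) * A * (U : Matrix n n 𝕜)ᴴ).IsDiag) :
    Finset.univ.val.map
        (fun i => RCLike.re (((U : Matrix n n 𝕜) * A * (U : Matrix n n 𝕜)ᴴ) i i)) =
      Finset.univ.val.map hA.eigenvalues := by
  have hroots := roots_charpoly_of_isDiag hU
  rw [charpoly_unitary_conj, hA.roots_charpoly_eq_eigenvalues] at hroots
  simpa [Function.comp_def] using (congrArg (Multiset.map RCLike.re) hroots).symm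

theorem isDiag_star_eigenvectorUnitary_conj (hA : A.IsHermitian) :
    (((star hA.eigenvectorUnitary : unitaryGroup n 𝕜) : Matrix n n 𝕜) * A *
      ((star hA.eigenvectorUnitary : unitaryGroup n 𝕜) : Matrix n n 𝕜)ᴴ).IsDiag := by
  have hconj := hA.conjStarAlgAut_star_eigenvectorUnitary
  rw [Unitary.conjStarAlgAut_apply, star_eq_conjTranspose] at hconj
  exact hconj ▸ isDiag_diagonal _

end Conjugation

theorem vonNeumann_eq_min_diag_shannon_general {𝕜 n : Type*} [RCLike 𝕜] [Fintype n]
    [DecidableEq n] {ρ : Matrix n n 𝕜} (hρ : ρ.PosSemidef) :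
    IsLeast
      {x : ℝ | ∃ U : unitaryGroup n 𝕜,
        x = Sh (fun i => RCLike.re (((U : Matrix n n 𝕜) * ρ * (U : Matrix n n 𝕜)ᴴ) i i))}
      (Sh hρ.1.eigenvalues) ∧
    ∀ U : unitaryGroup n 𝕜,
      ((U : Matrix n n 𝕜) * ρ * (U : Matrix n n 𝕜)ᴴ).IsDiag →
      Sh (fun i => RCLike.re (((U : Matrix n n 𝕜) * ρ * (U : Matrix n n 𝕜)ᴴ) i i)) =
        Sh hρ.1.eigenvalues := by
  have sh_diag_eq := fun U hU => sh_eq_of_map_eq (map_re_diag_conj_eq_map_eigenvalues hρ.1 U hU)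
  refine ⟨⟨?attained, ?lower_bound⟩, sh_diag_eq⟩
  case attained =>
    exact ⟨star hρ.1.eigenvectorUnitary,
      (sh_diag_eq _ (isDiag_star_eigenvectorUnitary_conj hρ.1)).symm⟩
  case lower_bound =>
    rintro x ⟨U, rfl⟩
    rw [sh_eq_sum_negMulLog, sh_eq_sum_negMulLog]
    exact sum_comp_eigenvalues_le_sum_comp_re_diag_conj hρ.1 Real.concaveOn_negMulLog
      hρ.eigenvalues_nonneg U

/-- the von Neumann entropy `VN ρ = Sh (eigenvalues of ρ)` is the
minimum over all unitaries `U` of the Shannon entropy of the diagonal of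
`U ρ U*`, and the minimum is attained at any unitary for which `U ρ U*` is
diagonal. -/
theorem vonNeumann_eq_min_diag_shannon (n : ℕ)
    (ρ : Matrix (Fin n) (Fin n) ℂ) (hρ : IsDensityMatrix ρ) :
    IsLeast
      {x : ℝ | ∃ U : Matrix.unitaryGroup (Fin n) ℂ,
        x = Sh (fun i =>
          (((U : Matrix (Fin n) (Fin n) ℂ) * ρ *
            (U : Matrix (Fin n) (Fin n) ℂ)ᴴ) i i).re)}
      (Sh hρ.1.1.eigenvalues) ∧
    ∀ U : Matrix.unitaryGroup (Fin n) ℂ,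
      ((U : Matrix (Fin n) (Fin n) ℂ) * ρ *
        (U : Matrix (Fin n) (Fin n) ℂ)ᴴ).IsDiag →
      Sh (fun i =>
          (((U : Matrix (Fin n) (Fin n) ℂ) * ρ *
            (U : Matrix (Fin n) (Fin n) ℂ)ᴴ) i i).re)
        = Sh hρ.1.1.eigenvalues :=
  vonNeumann_eq_min_diag_shannon_general hρ.1
end

section
/- For every density matrix ρ on ℂ^n there exists a unitary matrix U ∈ U(n) such that every diagonal entry of UρU* equals 1/n; consequently the contextual entropy of ρ at the corresponding rotated maximal context attains the maximal value ln n. -/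
/-!
If `H` is a complex Hadamard matrix, then every diagonal entry of `H D Hᴴ` for a diagonal matrix `D`
is `∑ k, |H i k|² D k k = tr D`, because the entries of `H` are unimodular. Diagonalising a
Hermitian `A` as `V A Vᴴ = D`, the unitary `U = n^(-1/2) H V` therefore spreads the trace of `A`
evenly over the diagonal of `U A Uᴴ`. Complex Hadamard matrices exist in every order: orthogonality
of characters makes the Fourier matrix `exp (2πi j k / n)` one.
-/

open Matrix ComplexOrder

lemma conj_diagonal_apply_self_of_mem_unitary {ι κ R : Type*} [Fintype κ] [DecidableEq κ]
    [CommSemiring R] [StarRing R] {H : Matrix ι κ R} {i : ι} (hH : ∀ k, H i k ∈ unitary R)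
    (d : κ → R) : (H * diagonal d * Hᴴ) i i = ∑ k, d k := by
  rw [Matrix.mul_apply]
  refine Finset.sum_congr rfl fun k _ => ?_
  have hunimodular : H i k * star (H i k) = 1 := Unitary.mul_star_self_of_mem (hH k)
  rw [mul_diagonal, conjTranspose_apply, mul_right_comm, hunimodular, one_mul]

lemma inv_sqrt_card_smul_conj {ι 𝕜 : Type*} [Fintype ι] [RCLike 𝕜] (H A : Matrix ι ι 𝕜) :
    ((√(Fintype.card ι))⁻¹ • H) * A * ((√(Fintype.card ι))⁻¹ • H)ᴴ =
      (Fintype.card ι : ℝ)⁻¹ • (H * A * Hᴴ) := by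
  have hsq : (√(Fintype.card ι))⁻¹ * (√(Fintype.card ι))⁻¹ = (Fintype.card ι : ℝ)⁻¹ := by
    rw [← mul_inv, Real.mul_self_sqrt (Nat.cast_nonneg _)]
  rw [conjTranspose_smul, star_trivial, smul_mul_assoc, smul_mul_assoc, mul_smul_comm,
    smul_smul, hsq]

section Hadamard

variable {ι 𝕜 : Type*} [Fintype ι] [DecidableEq ι] [RCLike 𝕜] {H : Matrix ι ι 𝕜}

lemma inv_sqrt_card_smul_mem_unitaryGroup (hH : H.IsHadamard) :
    (√(Fintype.card ι))⁻¹ • H ∈ unitaryGroup ι 𝕜 := by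
  rw [mem_unitaryGroup_iff, star_eq_conjTranspose]
  cases isEmpty_or_nonempty ι
  · exact Subsingleton.elim _ _
  · have hconj := inv_sqrt_card_smul_conj H 1
    rw [mul_one, mul_one, hH.mul_conjTranspose] at hconj
    rw [hconj, Nat.cast_smul_eq_nsmul, ← Nat.cast_smul_eq_nsmul ℝ,
      inv_smul_smul₀ (Nat.cast_ne_zero.mpr Fintype.card_ne_zero)]

lemma exists_unitary_conj_apply_self_eq_trace_div_card_of_isHadamard {A : Matrix ι ι 𝕜}
    (hH : H.IsHadamard) (hA : A.IsHermitian) :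
    ∃ U : unitaryGroup ι 𝕜, ∀ i,
      ((U : Matrix ι ι 𝕜) * A * (U : Matrix ι ι 𝕜)ᴴ) i i = A.trace / Fintype.card ι := by
  let F : unitaryGroup ι 𝕜 := ⟨_, inv_sqrt_card_smul_mem_unitaryGroup hH⟩
  let V : unitaryGroup ι 𝕜 := star hA.eigenvectorUnitary
  let D : Matrix ι ι 𝕜 := diagonal (RCLike.ofReal ∘ hA.eigenvalues)
  have hV : (V : Matrix ι ι 𝕜) * A * (V : Matrix ι ι 𝕜)ᴴ = D :=
    hA.conjStarAlgAut_star_eigenvectorUnitary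
  refine ⟨F * V, fun i => ?_⟩
  calc ((F * V : unitaryGroup ι 𝕜) * A * ((F * V : unitaryGroup ι 𝕜) : Matrix ι ι 𝕜)ᴴ) i i
      = ((F : Matrix ι ι 𝕜) * D * (F : Matrix ι ι 𝕜)ᴴ) i i := by
        simp only [← hV, Submonoid.coe_mul, conjTranspose_mul, Matrix.mul_assoc]
    _ = (Fintype.card ι : ℝ)⁻¹ • (H * D * Hᴴ) i i := by
        rw [inv_sqrt_card_smul_conj, Matrix.smul_apply]
    _ = A.trace / Fintype.card ι := by
        rw [conj_diagonal_apply_self_of_mem_unitary (hH.apply_mem i), hA.trace_eq_sum_eigenvalues,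
          RCLike.real_smul_eq_coe_mul, RCLike.ofReal_inv, RCLike.ofReal_natCast, inv_mul_eq_div]
        simp only [Function.comp_apply]

end Hadamard

lemma addChar_mul_star_eq_map_sub {G 𝕜 : Type*} [AddCommGroup G] [Finite G] [RCLike 𝕜]
    (ψ : AddChar G 𝕜) (x y : G) : ψ x * star (ψ y) = ψ (x - y) := by
  rw [RCLike.star_def, ← AddChar.map_neg_eq_conj, ← AddChar.map_add_eq_mul, ← sub_eq_add_neg]

lemma isHadamard_of_isPrimitive_addChar {R 𝕜 : Type*} [CommRing R] [Fintype R] [DecidableEq R]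
    [RCLike 𝕜] {ψ : AddChar R 𝕜} (hψ : ψ.IsPrimitive) :
    (of fun j k => ψ (j * k)).IsHadamard := by
  refine IsHadamard.of_mul_conjTranspose (fun j k => ?_) ?_
    (IsRegular.of_ne_zero (Nat.cast_ne_zero.mpr Fintype.card_ne_zero))
  · rw [of_apply, Unitary.mem_iff_self_mul_star, addChar_mul_star_eq_map_sub, sub_self,
      AddChar.map_zero_eq_one]
  · ext i j
    calc (of (fun j k => ψ (j * k)) * (of fun j k => ψ (j * k))ᴴ) i j
        = ∑ k, ψ (k * (i - j)) := by
          simp only [mul_apply, conjTranspose_apply, of_apply, addChar_mul_star_eq_map_sub,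
            ← sub_mul, mul_comm]
      _ = if i - j = 0 then (Fintype.card R : 𝕜) else 0 := by
          exact_mod_cast AddChar.sum_mulShift (i - j) hψ
      _ = ((Fintype.card R : 𝕜) • (1 : Matrix R R 𝕜)) i j := by
          simp only [Matrix.smul_apply, one_apply, sub_eq_zero, smul_eq_mul, mul_ite, mul_one,
            mul_zero]

lemma exists_isHadamard_complex (ι : Type*) [Fintype ι] [DecidableEq ι] :
    ∃ H : Matrix ι ι ℂ, H.IsHadamard := by
  cases isEmpty_or_nonempty ι
  · exact ⟨1, isEmptyElim, Subsingleton.elim _ _, Subsingleton.elim _ _⟩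
  · have : NeZero (Fintype.card ι) := ⟨Fintype.card_ne_zero⟩
    let e : ZMod (Fintype.card ι) ≃ ι := Fintype.equivOfCardEq (ZMod.card _)
    exact ⟨_, (isHadamard_of_isPrimitive_addChar (ZMod.isPrimitive_stdAddChar _)).reindex e e⟩

lemma Sh_one_div_card (ι : Type*) [Fintype ι] :
    Sh (fun _ : ι => 1 / (Fintype.card ι : ℝ)) = Real.log (Fintype.card ι) := by
  cases isEmpty_or_nonempty ι <;> simp [Sh]

theorem exists_unitary_uniform_diag_general {ι : Type*} [Fintype ι] [DecidableEq ι]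
    (ρ : Matrix ι ι ℂ) (hρ : ρ.IsHermitian) (htr : ρ.trace = 1) :
    ∃ U : unitaryGroup ι ℂ,
      (∀ i, ((U : Matrix ι ι ℂ) * ρ * (U : Matrix ι ι ℂ)ᴴ) i i = 1 / (Fintype.card ι : ℂ)) ∧
      Sh (fun i => (((U : Matrix ι ι ℂ) * ρ * (U : Matrix ι ι ℂ)ᴴ) i i).re) =
        Real.log (Fintype.card ι) := by
  obtain ⟨H, hH⟩ := exists_isHadamard_complex ι
  obtain ⟨U, hU⟩ := exists_unitary_conj_apply_self_eq_trace_div_card_of_isHadamard hH hρ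
  rw [htr] at hU
  refine ⟨U, hU, ?_⟩
  have hre : (1 / (Fintype.card ι : ℂ)).re = 1 / (Fintype.card ι : ℝ) := by simp
  simp only [hU, hre]
  exact Sh_one_div_card ι

/-- for every density matrix `ρ` on `ℂ^n` there is a unitary `U`
such that all diagonal entries of `U ρ U*` equal `1/n`; consequently the
Shannon entropy of that diagonal is `ln n`. -/
theorem exists_unitary_uniform_diag (n : ℕ)
    (ρ : Matrix (Fin n) (Fin n) ℂ) (hρ : IsDensityMatrix ρ) :
    ∃ U : Matrix.unitaryGroup (Fin n) ℂ,
      (∀ i, ((U : Matrix (Fin n) (Fin n) ℂ) * ρ *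
          (U : Matrix (Fin n) (Fin n) ℂ)ᴴ) i i = (1 / (n : ℂ))) ∧
      Sh (fun i =>
          (((U : Matrix (Fin n) (Fin n) ℂ) * ρ *
            (U : Matrix (Fin n) (Fin n) ℂ)ᴴ) i i).re)
        = Real.log n := by
  simpa only [Fintype.card_fin] using
    exists_unitary_uniform_diag_general ρ hρ.1.isHermitian hρ.2
end

section
/- Gleason's theorem for finite-dimensional matrix algebras: let n ≥ 3 and let m be a real-valued function on the set of orthogonal projections in M_n(ℂ) such that m(P) ∈ [0,1] for all projections P, m(I) = 1, and m(P + Q) = m(P) + m(Q) whenever P and Q are orthogonal projections with PQ = 0. Then there exists a unique density matrix ρ on ℂ^n such that m(P) = Tr(ρP) for every orthogonal projection P ∈ M_n(ℂ). -/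
open Matrix ComplexOrder

/-- An orthogonal projection: a self-adjoint idempotent matrix. -/
def IsProjection {ι : Type*} [Fintype ι] (P : Matrix ι ι ℂ) : Prop :=
  Pᴴ = P ∧ P * P = P

/-!
Every finitely additive `m` restricts to a frame function on the lines of the real span of an
orthonormal triple, a copy of `ℝ³`. A frame function on `ℝ³` that is bounded below is continuous,
because it varies little along descending paths of great circles; so it attains its extrema. Adding
its copy turned by a right angle about an extremal point gives a frame function that is constant on
the equator of that point, and such a function is affine in the squared height. This forces the
original function to be a quadratic form in the frame of its extremal points.
Back in `ℂⁿ`, `‖v‖² m(P_v)` is thus quadratic on the real span of each orthonormal pair. Varying the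
phases extends this to all of `ℂⁿ` as a parallelogram law, and the Jordan–von Neumann argument
yields a Hermitian form, whose matrix represents `m`.
-/

namespace Gleason

open Filter Topology

local notation "ℝ³" => EuclideanSpace ℝ (Fin 3)

lemma exists_norm_eq_one_inner_eq_zero {𝕜 E : Type*} [RCLike 𝕜] [NormedAddCommGroup E]
    [InnerProductSpace 𝕜 E] (h : 3 ≤ Module.finrank 𝕜 E) (p q : E) :
    ∃ r : E, ‖r‖ = 1 ∧ inner 𝕜 p r = 0 ∧ inner 𝕜 q r = 0 := by
  classical
  let S := Submodule.span 𝕜 ({p, q} : Set E)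
  have hfin : FiniteDimensional 𝕜 S := FiniteDimensional.span_of_finite 𝕜 (Set.toFinite _)
  have hS : Module.finrank 𝕜 S ≤ 2 := by
    have := finrank_span_finset_le_card (R := 𝕜) (M := E) {p, q}
    rw [Finset.coe_pair] at this
    exact this.trans Finset.card_le_two
  have hne : Sᗮ ≠ ⊥ := by
    rw [Ne, Submodule.orthogonal_eq_bot_iff]
    intro hS'
    rw [hS', finrank_top] at hS
    omega
  obtain ⟨w, hw, hw0⟩ := Submodule.exists_mem_ne_zero_of_ne_bot hne
  rw [Submodule.mem_orthogonal] at hw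
  have hp : inner 𝕜 p w = 0 := hw p (Submodule.subset_span (by simp))
  have hq : inner 𝕜 q w = 0 := hw q (Submodule.subset_span (by simp))
  exact ⟨((‖w‖⁻¹ : ℝ) : 𝕜) • w, by simp [norm_smul, hw0], by simp [inner_smul_right, hp],
    by simp [inner_smul_right, hq]⟩

/-! ### Frame functions on `ℝ³` -/

section Vectors

variable (x y z x' y' z' t : ℝ)

lemma inner_vec3 : inner ℝ (!₂[x, y, z] : ℝ³) !₂[x', y', z'] = x * x' + y * y' + z * z' := by
  simp only [PiLp.inner_apply, RCLike.inner_apply, conj_trivial, Fin.sum_univ_three, cons_val]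
  ring

lemma norm_sq_vec3 : ‖(!₂[x, y, z] : ℝ³)‖ ^ 2 = x ^ 2 + y ^ 2 + z ^ 2 := by
  rw [← real_inner_self_eq_norm_sq, inner_vec3]
  ring

lemma smul_vec3 : t • (!₂[x, y, z] : ℝ³) = !₂[t * x, t * y, t * z] := by
  ext i
  fin_cases i <;> rfl

lemma vec3_eta (v : ℝ³) : !₂[v 0, v 1, v 2] = v := by
  ext i
  fin_cases i <;> rfl

variable {x y z} in
lemma vec3_ne_zero (h : x ^ 2 + y ^ 2 + z ^ 2 ≠ 0) : (!₂[x, y, z] : ℝ³) ≠ 0 := by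
  rintro h0
  simp [← norm_sq_vec3, h0] at h

variable {x y z} in
lemma norm_vec3_eq_one (h : x ^ 2 + y ^ 2 + z ^ 2 = 1) : ‖(!₂[x, y, z] : ℝ³)‖ = 1 := by
  rw [← pow_eq_one_iff_of_nonneg (norm_nonneg _) two_ne_zero, norm_sq_vec3, h]

lemma exists_linearIsometryEquiv {p q : ℝ³} (hp : ‖p‖ = 1) (hq : ‖q‖ = 1)
    (hpq : inner ℝ p q = 0) :
    ∃ T : ℝ³ ≃ₗᵢ[ℝ] ℝ³, T !₂[0, 0, 1] = p ∧ T !₂[1, 0, 0] = q := by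
  obtain ⟨r, hr, hpr, hqr⟩ := exists_norm_eq_one_inner_eq_zero (𝕜 := ℝ) (by simp) p q
  have hv : Orthonormal ℝ ![q, r, p] := by
    simp [orthonormal_vecCons_iff, hp, hq, hr, hqr, real_inner_comm, hpq, hpr]
  let b : OrthonormalBasis (Fin 3) ℝ ℝ³ := .mk hv
    (hv.linearIndependent.span_eq_top_of_card_eq_finrank (by simp)).ge
  refine ⟨b.repr.symm, ?_, ?_⟩
  · have : (!₂[0, 0, 1] : ℝ³) = EuclideanSpace.single 2 1 := by ext i; fin_cases i <;> simp
    simp [this, b]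
  · have : (!₂[1, 0, 0] : ℝ³) = EuclideanSpace.single 0 1 := by ext i; fin_cases i <;> simp
    simp [this, b]

lemma exists_linearIsometryEquiv_pole {p : ℝ³} (hp : ‖p‖ = 1) :
    ∃ T : ℝ³ ≃ₗᵢ[ℝ] ℝ³, T !₂[0, 0, 1] = p := by
  obtain ⟨q, hq, hpq, -⟩ := exists_norm_eq_one_inner_eq_zero (𝕜 := ℝ) (by simp) p p
  obtain ⟨T, hT, -⟩ := exists_linearIsometryEquiv hp hq hpq
  exact ⟨T, hT⟩

end Vectors

/-- A frame function of weight `W` on `ℝ³`: a function of the line through a vector whose values on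
every orthonormal basis add up to `W`. Vectors need not be unit vectors; the value at `0` is
irrelevant. -/
structure IsFrameFunction (f : ℝ³ → ℝ) (W : ℝ) : Prop where
  smul : ∀ t : ℝ, t ≠ 0 → ∀ v, f (t • v) = f v
  sum_orthonormalBasis : ∀ b : OrthonormalBasis (Fin 3) ℝ ℝ³, ∑ i, f (b i) = W

namespace IsFrameFunction

variable {f g : ℝ³ → ℝ} {W W' : ℝ}

lemma apply_inv_norm_smul (hf : IsFrameFunction f W) {v : ℝ³} (hv : v ≠ 0) :
    f (‖v‖⁻¹ • v) = f v :=
  hf.smul _ (inv_ne_zero (norm_ne_zero_iff.2 hv)) v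

lemma add_add_eq_of_orthogonal (hf : IsFrameFunction f W) {u v w : ℝ³} (hu : u ≠ 0) (hv : v ≠ 0)
    (hw : w ≠ 0) (huv : inner ℝ u v = 0) (huw : inner ℝ u w = 0) (hvw : inner ℝ v w = 0) :
    f u + f v + f w = W := by
  have h : Orthonormal ℝ ![‖u‖⁻¹ • u, ‖v‖⁻¹ • v, ‖w‖⁻¹ • w] := by
    simp [orthonormal_vecCons_iff, norm_smul, hu, hv, hw, inner_smul_left, inner_smul_right,
      huv, huw, hvw]
  have hsum := hf.sum_orthonormalBasis
    (.mk h (h.linearIndependent.span_eq_top_of_card_eq_finrank (by simp)).ge)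
  simpa [Fin.sum_univ_three, hf.apply_inv_norm_smul, hu, hv, hw] using hsum

lemma vec3_add_add (hf : IsFrameFunction f W) {x₁ y₁ z₁ x₂ y₂ z₂ x₃ y₃ z₃ : ℝ}
    (h₁ : x₁ ^ 2 + y₁ ^ 2 + z₁ ^ 2 ≠ 0) (h₂ : x₂ ^ 2 + y₂ ^ 2 + z₂ ^ 2 ≠ 0)
    (h₃ : x₃ ^ 2 + y₃ ^ 2 + z₃ ^ 2 ≠ 0) (h₁₂ : x₁ * x₂ + y₁ * y₂ + z₁ * z₂ = 0)
    (h₁₃ : x₁ * x₃ + y₁ * y₃ + z₁ * z₃ = 0) (h₂₃ : x₂ * x₃ + y₂ * y₃ + z₂ * z₃ = 0) :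
    f !₂[x₁, y₁, z₁] + f !₂[x₂, y₂, z₂] + f !₂[x₃, y₃, z₃] = W :=
  hf.add_add_eq_of_orthogonal (vec3_ne_zero h₁) (vec3_ne_zero h₂) (vec3_ne_zero h₃)
    (by rwa [inner_vec3]) (by rwa [inner_vec3]) (by rwa [inner_vec3])

lemma vec3_eq_of_smul (hf : IsFrameFunction f W) {t x y z x' y' z' : ℝ} (ht : t ≠ 0)
    (hx : x' = t * x) (hy : y' = t * y) (hz : z' = t * z) : f !₂[x', y', z'] = f !₂[x, y, z] := by
  rw [hx, hy, hz, ← smul_vec3, hf.smul t ht]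

lemma comp_isometry (hf : IsFrameFunction f W) (T : ℝ³ ≃ₗᵢ[ℝ] ℝ³) :
    IsFrameFunction (fun v ↦ f (T v)) W where
  smul t ht v := by simp [hf.smul t ht]
  sum_orthonormalBasis b := by simpa using hf.sum_orthonormalBasis (b.map T)

lemma add (hf : IsFrameFunction f W) (hg : IsFrameFunction g W') :
    IsFrameFunction (fun v ↦ f v + g v) (W + W') where
  smul t ht v := by rw [hf.smul t ht, hg.smul t ht]
  sum_orthonormalBasis b := by
    rw [Finset.sum_add_distrib, hf.sum_orthonormalBasis, hg.sum_orthonormalBasis]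

lemma neg (hf : IsFrameFunction f W) : IsFrameFunction (fun v ↦ -f v) (-W) where
  smul t ht v := by rw [hf.smul t ht]
  sum_orthonormalBasis b := by rw [Finset.sum_neg_distrib, hf.sum_orthonormalBasis]

lemma sub_const (hf : IsFrameFunction f W) (k : ℝ) :
    IsFrameFunction (fun v ↦ f v - k) (W - 3 * k) where
  smul t ht v := by rw [hf.smul t ht]
  sum_orthonormalBasis b := by simp [Finset.sum_sub_distrib, hf.sum_orthonormalBasis]

end IsFrameFunction

lemma isFrameFunction_inner_div_norm_sq (A : ℝ³ →ₗ[ℝ] ℝ³) :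
    IsFrameFunction (fun v ↦ inner ℝ v (A v) / ‖v‖ ^ 2) (LinearMap.trace ℝ ℝ³ A) where
  smul t ht v := by
    rw [map_smul, real_inner_smul_left, real_inner_smul_right, norm_smul, mul_pow, Real.norm_eq_abs,
      sq_abs, ← mul_assoc, ← sq, mul_div_mul_left _ _ (pow_ne_zero 2 ht)]
  sum_orthonormalBasis b := by simp [LinearMap.trace_eq_sum_inner A b]

/-- The rotation by a right angle about the third axis. -/
noncomputable def quarterTurn : ℝ³ ≃ₗᵢ[ℝ] ℝ³ :=
  LinearIsometry.toLinearIsometryEquiv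
    { toFun := fun v ↦ !₂[-v 1, v 0, v 2]
      map_add' := fun u v ↦ by ext i; fin_cases i <;> simp [add_comm]
      map_smul' := fun t v ↦ by ext i; fin_cases i <;> simp
      norm_map' := fun v ↦ by
        rw [← sq_eq_sq₀ (norm_nonneg _) (norm_nonneg _)]
        conv_rhs => rw [← vec3_eta v]
        simp only [LinearMap.coe_mk, AddHom.coe_mk, norm_sq_vec3]
        ring } rfl

lemma quarterTurn_vec3 (x y z : ℝ) : quarterTurn !₂[x, y, z] = !₂[-y, x, z] := rfl

/-- The sum of `f` and its copy turned by a right angle about the third axis. For a frame function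
`f` it is constant on the equator. -/
noncomputable def symmetrize (f : ℝ³ → ℝ) (v : ℝ³) : ℝ := f v + f (quarterTurn v)

/-- `g` takes the value `c` on the plane orthogonal to the third axis. -/
def EquatorConst (g : ℝ³ → ℝ) (c : ℝ) : Prop :=
  ∀ x y : ℝ, x ^ 2 + y ^ 2 ≠ 0 → g !₂[x, y, 0] = c

section Symmetrize

variable {f : ℝ³ → ℝ} {W : ℝ}

lemma isFrameFunction_symmetrize (hf : IsFrameFunction f W) :
    IsFrameFunction (symmetrize f) (W + W) :=
  hf.add (hf.comp_isometry quarterTurn)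

lemma symmetrize_pole (f : ℝ³ → ℝ) : symmetrize f !₂[0, 0, 1] = 2 * f !₂[0, 0, 1] := by
  rw [symmetrize, quarterTurn_vec3, neg_zero, two_mul]

lemma equatorConst_symmetrize (hf : IsFrameFunction f W) :
    EquatorConst (symmetrize f) (W - f !₂[0, 0, 1]) := by
  intro x y hxy
  rw [symmetrize, quarterTurn_vec3, eq_sub_iff_add_eq]
  exact hf.vec3_add_add (by simpa) (by simpa [add_comm]) (by simp) (by ring) (by simp) (by simp)

end Symmetrize

/-! ### Frame functions constant on the equator -/

/-- The point above `w` in the plane at height one: the coordinate of an open hemisphere under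
central projection. -/
noncomputable def gnomonic (w : ℂ) : ℝ³ := !₂[w.re, w.im, 1]

lemma gnomonic_ne_zero (w : ℂ) : gnomonic w ≠ 0 := vec3_ne_zero (by positivity)

/-- The gnomonic coordinate of the point orthogonal to `(-ρ * r, 1 + r ^ 2, -ρ)` on the meridian of
that vector, which is itself orthogonal to `(r, ρ, 1)` and `(1, 0, -r)`. From this point to
`(r, ρ, 1)` a frame function that is constant on the equator increases by an amount independent of
`ρ`. -/
noncomputable def jumpPoint (r ρ : ℝ) : ℂ :=
  ⟨-ρ ^ 2 * r / (ρ ^ 2 * r ^ 2 + (1 + r ^ 2) ^ 2),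
    ρ * (1 + r ^ 2) / (ρ ^ 2 * r ^ 2 + (1 + r ^ 2) ^ 2)⟩

lemma one_le_re_jumpPoint_div {r ρ : ℝ} (hr : 0 ≤ r) (hρ : 1 ≤ ρ) (hρr : 10 * ρ * r ≤ 1) :
    1 ≤ (jumpPoint r (2 * ρ) / ⟨r, ρ⟩).re := by
  set D := (2 * ρ) ^ 2 * r ^ 2 + (1 + r ^ 2) ^ 2 with hD
  have hD0 : 0 < D := by positivity
  have hn0 : 0 < r * r + ρ * ρ := by positivity
  have hre : (jumpPoint r (2 * ρ) / ⟨r, ρ⟩).re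
      = 2 * ρ ^ 2 * (1 - r ^ 2) / (D * (r * r + ρ * ρ)) := by
    simp only [Complex.div_re, jumpPoint, Complex.normSq_mk, ← hD]
    field_simp
    ring
  have hρr2 : ρ ^ 2 * r ^ 2 ≤ 1 / 100 := by nlinarith [mul_nonneg (zero_le_one.trans hρ) hr]
  have hr2 : r ^ 2 ≤ 1 / 100 := by nlinarith [sq_nonneg r]
  have hD1 : D ≤ 11 / 10 := by nlinarith [sq_nonneg r]
  have hn1 : r * r + ρ * ρ ≤ 101 / 100 * ρ ^ 2 := by nlinarith
  rw [hre, one_le_div₀ (by positivity)]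
  calc D * (r * r + ρ * ρ) ≤ 11 / 10 * (101 / 100 * ρ ^ 2) := by gcongr
    _ ≤ 2 * ρ ^ 2 * (1 - r ^ 2) := by nlinarith [sq_nonneg ρ]

section Equator

variable {g : ℝ³ → ℝ} {W c : ℝ}

lemma IsFrameFunction.meridian (hg : IsFrameFunction g W) (hc : EquatorConst g c) {x y : ℝ}
    (z : ℝ) (h : x ^ 2 + y ^ 2 ≠ 0) :
    g !₂[x, y, z] + g !₂[-z * x, -z * y, x ^ 2 + y ^ 2] = g !₂[0, 0, 1] + c := by
  have hpos : 0 < x ^ 2 + y ^ 2 := h.symm.lt_of_le (by positivity)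
  have hyx : (-y) ^ 2 + x ^ 2 + 0 ^ 2 ≠ 0 := by nlinarith
  have hmeridian := hg.vec3_add_add (x₁ := x) (y₁ := y) (z₁ := z) (x₂ := -z * x) (y₂ := -z * y)
    (by positivity) (by positivity) hyx (by ring) (by ring) (by ring)
  have hequator := hg.vec3_add_add (x₁ := 0) (y₁ := 0) (z₁ := 1) (x₂ := x) (y₂ := y) (z₂ := 0)
    (by simp) (by simpa using h) hyx (by ring) (by ring) (by ring)
  rw [hc x y h] at hequator
  linarith

lemma IsFrameFunction.le_of_equatorConst (hg : IsFrameFunction g W) (hc : EquatorConst g c) {k : ℝ}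
    (hk : ∀ v, v ≠ 0 → k ≤ g v) {v : ℝ³} (hv : v ≠ 0) : g v ≤ c + (g !₂[0, 0, 1] - k) := by
  rw [← vec3_eta v] at hv ⊢
  by_cases h : v 0 ^ 2 + v 1 ^ 2 = 0
  · obtain ⟨h0, h1⟩ : v 0 = 0 ∧ v 1 = 0 := by
      constructor <;> nlinarith [sq_nonneg (v 0), sq_nonneg (v 1)]
    have h2 : v 2 ≠ 0 := by
      rintro h2
      exact hv (by ext i; fin_cases i <;> simp [h0, h1, h2])
    rw [hg.vec3_eq_of_smul h2 (x := 0) (y := 0) (z := 1) (by simp [h0]) (by simp [h1]) (by simp)]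
    have := hc 1 0 (by simp)
    have := hk !₂[1, 0, 0] (vec3_ne_zero (by simp))
    linarith
  · have := hg.meridian hc (v 2) h
    have := hk !₂[-v 2 * v 0, -v 2 * v 1, v 0 ^ 2 + v 1 ^ 2] (vec3_ne_zero (by positivity))
    linarith

/- The great circle through `gnomonic w` and the point `I * w` of the equator consists, up to the
latter, of the points `gnomonic (w * (1 + t * I))`. -/
lemma IsFrameFunction.gnomonic_le_mul_one_add (hg : IsFrameFunction g W) (hc : EquatorConst g c)
    {M : ℝ} (hM : ∀ v, v ≠ 0 → g v ≤ M) (w : ℂ) (t : ℝ) :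
    g (gnomonic w) ≤ g (gnomonic (w * (1 + t * Complex.I))) + (M - c) := by
  rcases eq_or_ne w 0 with rfl | hw
  · have := hM !₂[1, 0, 0] (vec3_ne_zero (by simp))
    rw [hc 1 0 (by simp)] at this
    simpa using this
  obtain ⟨a, b⟩ := w
  have hpos : 0 < a ^ 2 + b ^ 2 := by
    have := Complex.normSq_pos.2 hw
    rwa [Complex.normSq_mk, ← sq, ← sq] at this
  have hw' : gnomonic (⟨a, b⟩ * (1 + t * Complex.I)) = !₂[a - t * b, b + t * a, 1] := by
    simp only [gnomonic]
    congr <;> simp <;> ring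
  rw [hw', gnomonic]
  set r := a ^ 2 + b ^ 2 with hr
  have hnormal : a ^ 2 + b ^ 2 + (-r) ^ 2 ≠ 0 := by positivity
  have hfar :
      (-(1 + r) * b - t * r * a) ^ 2 + ((1 + r) * a - t * r * b) ^ 2 + (-(t * r)) ^ 2 ≠ 0 := by
    have : (-(1 + r) * b - t * r * a) ^ 2 + ((1 + r) * a - t * r * b) ^ 2 + (-(t * r)) ^ 2
      = ((1 + r) ^ 2 + (t * r) ^ 2) * r + (t * r) ^ 2 := by rw [hr]; ring
    rw [this]
    positivity
  have htop := hg.vec3_add_add (x₁ := a) (y₁ := b) (z₁ := 1) (x₂ := -b) (y₂ := a) (z₂ := 0)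
    (by positivity) (by nlinarith) hnormal (by ring) (by rw [hr]; ring) (by ring)
  have hmoved := hg.vec3_add_add (x₁ := a - t * b) (y₁ := b + t * a) (z₁ := 1)
    (by positivity) hfar hnormal (by rw [hr]; ring) (by rw [hr]; ring) (by rw [hr]; ring)
  rw [hc (-b) a (by nlinarith)] at htop
  have := hM _ (vec3_ne_zero hfar)
  linarith

lemma exists_eq_one_add_mul_one_add {z : ℂ} (hz : 1 ≤ z.re) :
    ∃ s t : ℝ, z = (1 + s * Complex.I) * (1 + t * Complex.I) := by
  set d := √(z.im ^ 2 + 4 * (z.re - 1))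
  have hd : d ^ 2 = z.im ^ 2 + 4 * (z.re - 1) := Real.sq_sqrt (by nlinarith [sq_nonneg z.im])
  let s := (z.im + d) / 2
  let t := (z.im - d) / 2
  have hsum : s + t = z.im := by ring
  have hprod : s * t = 1 - z.re := by linear_combination -hd / 4
  refine ⟨s, t, ?_⟩
  calc z = (1 - s * t : ℝ) + (s + t : ℝ) * Complex.I := by
        rw [hsum, hprod, sub_sub_cancel, Complex.re_add_im]
    _ = (1 + s * Complex.I) * (1 + t * Complex.I) := by
        push_cast
        linear_combination -s * t * Complex.I_sq

lemma IsFrameFunction.gnomonic_le_mul (hg : IsFrameFunction g W) (hc : EquatorConst g c)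
    {M : ℝ} (hM : ∀ v, v ≠ 0 → g v ≤ M) (w : ℂ) {z : ℂ} (hz : 1 ≤ z.re) :
    g (gnomonic w) ≤ g (gnomonic (w * z)) + 2 * (M - c) := by
  obtain ⟨s, t, rfl⟩ := exists_eq_one_add_mul_one_add hz
  have hs := hg.gnomonic_le_mul_one_add hc hM w s
  have ht := hg.gnomonic_le_mul_one_add hc hM (w * (1 + s * Complex.I)) t
  rw [mul_assoc] at ht
  linarith

lemma IsFrameFunction.gnomonic_sub_jumpPoint (hg : IsFrameFunction g W) (hc : EquatorConst g c)
    (r ρ : ℝ) :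
    g (gnomonic ⟨r, ρ⟩) - g (gnomonic (jumpPoint r ρ)) = g (gnomonic r) - g !₂[0, 0, 1] := by
  have hnormal : (1 : ℝ) ^ 2 + 0 ^ 2 + (-r) ^ 2 ≠ 0 := by positivity
  have hzero := hg.vec3_add_add (x₁ := r) (y₁ := 0) (z₁ := 1) (x₂ := 0) (y₂ := 1) (z₂ := 0)
    (by positivity) (by simp) hnormal (by ring) (by ring) (by ring)
  have hρ := hg.vec3_add_add (x₁ := r) (y₁ := ρ) (z₁ := 1) (x₂ := -ρ * r) (y₂ := 1 + r ^ 2)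
    (z₂ := -ρ) (by positivity) (by positivity) hnormal (by ring) (by ring) (by ring)
  have hmeridian := hg.meridian hc (x := -ρ * r) (y := 1 + r ^ 2) (-ρ) (by positivity)
  have hjump : g !₂[- -ρ * (-ρ * r), - -ρ * (1 + r ^ 2), (-ρ * r) ^ 2 + (1 + r ^ 2) ^ 2]
      = g (gnomonic (jumpPoint r ρ)) := by
    refine hg.vec3_eq_of_smul (t := ρ ^ 2 * r ^ 2 + (1 + r ^ 2) ^ 2) (by positivity) ?_ ?_ (by ring)
    all_goals
      simp only [jumpPoint]
      field_simp
  rw [hjump] at hmeridian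
  rw [hc 0 1 (by simp)] at hzero
  simp only [gnomonic, Complex.ofReal_re, Complex.ofReal_im]
  simp only [gnomonic] at hmeridian
  linarith

lemma IsFrameFunction.add_one_mul_le_gnomonic (hg : IsFrameFunction g W) (hc : EquatorConst g c)
    (hpos : ∀ v, v ≠ 0 → 0 ≤ g v) {M : ℝ} (hM : ∀ v, v ≠ 0 → g v ≤ M) {N : ℕ} {r : ℝ} (hr : 0 ≤ r)
    (hrN : 10 * 2 ^ N * r ≤ 1) :
    (N + 1) * (g (gnomonic r) - g !₂[0, 0, 1]) - 2 * (M - c) * N ≤ g (gnomonic ⟨r, 2 ^ N⟩) := by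
  induction N with
  | zero =>
    have := hg.gnomonic_sub_jumpPoint hc r (2 ^ 0)
    have := hpos _ (gnomonic_ne_zero (jumpPoint r (2 ^ 0)))
    push_cast
    linarith
  | succ N ih =>
    rw [pow_succ'] at hrN ⊢
    have h2 : (1 : ℝ) ≤ 2 ^ N := one_le_pow₀ one_le_two
    have hrN' : 10 * 2 ^ N * r ≤ 1 := by nlinarith
    have hne : (⟨r, 2 ^ N⟩ : ℂ) ≠ 0 := fun h ↦ by simp [Complex.ext_iff] at h
    have hdescent := hg.gnomonic_le_mul hc hM ⟨r, 2 ^ N⟩ (one_le_re_jumpPoint_div hr h2 hrN')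
    rw [mul_div_cancel₀ _ hne] at hdescent
    have hjump := hg.gnomonic_sub_jumpPoint hc r (2 * 2 ^ N)
    have := ih hrN'
    push_cast
    linarith

end Equator

section NearPole

variable {f : ℝ³ → ℝ} {W : ℝ}

/- Summing the jumps of `symmetrize f` at the heights `2 ^ k`, `k ≤ N`, which are all equal, bounds
each of them by a multiple of `1 / N`. -/
lemma IsFrameFunction.gnomonic_ofReal_le (hf : IsFrameFunction f W) (hpos : ∀ v, v ≠ 0 → 0 ≤ f v)
    {N : ℕ} {r : ℝ} (hr : 0 ≤ r) (hrN : 10 * 2 ^ N * r ≤ 1) :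
    f (gnomonic r) ≤ 6 * f !₂[0, 0, 1] + 2 * W / (N + 1) := by
  set η := f !₂[0, 0, 1]
  have hpos' : ∀ v, v ≠ 0 → 0 ≤ symmetrize f v := fun v hv ↦
    add_nonneg (hpos v hv) (hpos _ (by simpa using hv))
  have hc := equatorConst_symmetrize hf
  have hM : ∀ v, v ≠ 0 → symmetrize f v ≤ W + η := fun v hv ↦ by
    have := (isFrameFunction_symmetrize hf).le_of_equatorConst hc hpos' hv
    rw [symmetrize_pole] at this
    linarith
  have hchain := (isFrameFunction_symmetrize hf).add_one_mul_le_gnomonic hc hpos' hM hr hrN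
  rw [symmetrize_pole] at hchain
  have hη : 0 ≤ η := hpos _ (vec3_ne_zero (by simp))
  have hηW : η ≤ W := by
    have := hpos' !₂[1, 0, 0] (vec3_ne_zero (by simp))
    rw [hc 1 0 (by simp)] at this
    linarith
  have hle : f (gnomonic r) ≤ symmetrize f (gnomonic r) :=
    le_add_of_nonneg_right (hpos _ (by simpa using gnomonic_ne_zero r))
  have hbound := hM _ (gnomonic_ne_zero ⟨r, 2 ^ N⟩)
  have hN : (0 : ℝ) < N + 1 := by positivity
  rw [← sub_le_iff_le_add', le_div_iff₀ hN]
  nlinarith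

lemma IsFrameFunction.apply_add_le (hf : IsFrameFunction f W) (hpos : ∀ v, v ≠ 0 → 0 ≤ f v)
    {p w : ℝ³} (hp : ‖p‖ = 1) (hpw : inner ℝ p w = 0) {N : ℕ} (hw : 10 * 2 ^ N * ‖w‖ ≤ 1) :
    f (p + w) ≤ 6 * f p + 2 * W / (N + 1) := by
  obtain ⟨q, hq, hpq, hwq⟩ : ∃ q : ℝ³, ‖q‖ = 1 ∧ inner ℝ p q = 0 ∧ ‖w‖ • q = w := by
    rcases eq_or_ne w 0 with rfl | hw0
    · obtain ⟨q, hq, hpq, -⟩ := exists_norm_eq_one_inner_eq_zero (𝕜 := ℝ) (by simp) p p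
      exact ⟨q, hq, hpq, by simp⟩
    · exact ⟨‖w‖⁻¹ • w, by simp [norm_smul, hw0], by simp [inner_smul_right, hpw],
        smul_inv_smul₀ (norm_ne_zero_iff.2 hw0) w⟩
  obtain ⟨T, hTp, hTq⟩ := exists_linearIsometryEquiv hp hq hpq
  have hT : T (gnomonic ‖w‖) = p + w := by
    have : gnomonic ‖w‖ = !₂[0, 0, 1] + ‖w‖ • !₂[1, 0, 0] := by
      ext i
      fin_cases i <;> simp [gnomonic]
    rw [this, map_add, map_smul, hTp, hTq, hwq]
  have hle := (hf.comp_isometry T).gnomonic_ofReal_le (fun v hv ↦ hpos _ (by simpa using hv))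
    (norm_nonneg w) hw
  rwa [hT, hTp] at hle

lemma IsFrameFunction.eventually_le (hf : IsFrameFunction f W) (hpos : ∀ v, v ≠ 0 → 0 ≤ f v)
    {p : ℝ³} (hp : ‖p‖ = 1) {ε : ℝ} (hε : 0 < ε) : ∀ᶠ v in 𝓝 p, f v ≤ 6 * f p + ε := by
  obtain ⟨N, hN⟩ := exists_nat_gt (2 * W / ε)
  have hNε : 2 * W / (N + 1) ≤ ε := by
    rw [div_le_iff₀ (by positivity)]
    rw [div_lt_iff₀ hε] at hN
    linarith
  have hpp : inner ℝ p p = 1 := by simp [hp]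
  have hpp0 : inner ℝ p p ≠ 0 := hpp.trans_ne one_ne_zero
  have hinner : ContinuousAt (fun v ↦ inner ℝ p v) p := by fun_prop
  have hcont : ContinuousAt (fun v ↦ (inner ℝ p v)⁻¹ • v - p) p :=
    ((hinner.inv₀ hpp0).smul continuousAt_id).sub continuousAt_const
  have hsmall : ∀ᶠ v in 𝓝 p, ‖(inner ℝ p v)⁻¹ • v - p‖ < 1 / (10 * 2 ^ N) :=
    hcont.norm.eventually_lt_const (by simp [hp])
  filter_upwards [hsmall, hinner.eventually_ne hpp0] with v hv hv0
  have hle := hf.apply_add_le hpos hp (w := (inner ℝ p v)⁻¹ • v - p)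
    (by rw [inner_sub_right, inner_smul_right, inv_mul_cancel₀ hv0, hpp, sub_self])
    (N := N) (by rw [lt_div_iff₀ (by positivity)] at hv; linarith)
  rw [add_sub_cancel, hf.smul _ (inv_ne_zero hv0)] at hle
  linarith

end NearPole

/-! ### Continuity of bounded frame functions -/

lemma continuousAt_vec3 {X : Type*} [TopologicalSpace X] {a b c : X → ℝ} {x : X}
    (ha : ContinuousAt a x) (hb : ContinuousAt b x) (hc : ContinuousAt c x) :
    ContinuousAt (fun x ↦ (!₂[a x, b x, c x] : ℝ³)) x := by
  refine (PiLp.continuous_toLp 2 _).continuousAt.comp (continuousAt_pi.2 fun i ↦ ?_)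
  fin_cases i <;> assumption

section Oscillation

variable {f : ℝ³ → ℝ} {W ε : ℝ}

lemma IsFrameFunction.sub_equator_eq (hf : IsFrameFunction f W) (s t : ℝ) :
    f !₂[1, s, t] - f !₂[1, s, 0] = -(f !₂[-t, -t * s, 1 + s ^ 2] - f !₂[0, 0, 1]) := by
  have hnormal : (-s) ^ 2 + 1 ^ 2 + 0 ^ 2 ≠ 0 := by positivity
  have hmeridian := hf.vec3_add_add (x₁ := 1) (y₁ := s) (z₁ := t) (x₂ := -t) (y₂ := -t * s)
    (z₂ := 1 + s ^ 2) (by positivity) (by positivity) hnormal (by ring) (by ring) (by ring)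
  have hequator := hf.vec3_add_add (x₁ := 1) (y₁ := s) (z₁ := 0) (x₂ := 0) (y₂ := 0) (z₂ := 1)
    (by positivity) (by positivity) hnormal (by ring) (by ring) (by ring)
  linarith

lemma IsFrameFunction.sub_axis_eq (hf : IsFrameFunction f W) {s m : ℝ} (hs : s ≠ 0) (hm : m ≠ 0) :
    f !₂[1, s, s / m] - f !₂[1, 0, 0] = f !₂[0, m, 1] - f !₂[-(s * m + s / m), m, 1] := by
  have hnormal : (0 : ℝ) ^ 2 + (-1) ^ 2 + m ^ 2 ≠ 0 := by positivity
  have haxis := hf.vec3_add_add (x₁ := 1) (y₁ := 0) (z₁ := 0) (x₂ := 0) (y₂ := m) (z₂ := 1)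
    (by positivity) (by positivity) hnormal (by ring) (by ring) (by ring)
  have hpoint := hf.vec3_add_add (x₁ := 1) (y₁ := s) (z₁ := s / m) (x₂ := -(s * m + s / m))
    (y₂ := m) (z₂ := 1) (by positivity) (by positivity) hnormal (by field) (by field) (by ring)
  linarith

lemma IsFrameFunction.eventually_sub_equator_le (hf : IsFrameFunction f W)
    (h : ∀ᶠ v in 𝓝 !₂[0, 0, 1], |f v - f !₂[0, 0, 1]| ≤ ε) :
    ∀ᶠ x : ℝ × ℝ in 𝓝 (0, 0), |f !₂[1, x.1, x.2] - f !₂[1, x.1, 0]| ≤ ε := by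
  have hcont : ContinuousAt (fun x : ℝ × ℝ ↦ (!₂[-x.2, -x.2 * x.1, 1 + x.1 ^ 2] : ℝ³)) (0, 0) :=
    continuousAt_vec3 (by fun_prop) (by fun_prop) (by fun_prop)
  filter_upwards [hcont.eventually (p := fun v ↦ |f v - f !₂[0, 0, 1]| ≤ ε) (by simpa using h)]
    with x hx
  rwa [hf.sub_equator_eq, abs_neg]

/- The great circle through `(1, 0, 0)` and `(0, m, 1)`, for a small fixed `m ≠ 0`, passes close to
the pole and meets the meridian of `(1, s, 0)` in `(1, s, s / m)`. -/
lemma IsFrameFunction.eventually_equator_sub_axis_le (hf : IsFrameFunction f W)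
    (h : ∀ᶠ v in 𝓝 !₂[0, 0, 1], |f v - f !₂[0, 0, 1]| ≤ ε) :
    ∀ᶠ s in 𝓝 0, |f !₂[1, s, 0] - f !₂[1, 0, 0]| ≤ 3 * ε := by
  have hcont : ContinuousAt (fun m : ℝ ↦ (!₂[0, m, 1] : ℝ³)) 0 :=
    continuousAt_vec3 (by fun_prop) (by fun_prop) (by fun_prop)
  obtain ⟨m, hm, hm0⟩ := (((hcont.eventually (eventually_eventually_nhds.2 h)).filter_mono
    nhdsWithin_le_nhds).and (self_mem_nhdsWithin (s := {0}ᶜ))).exists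
  have hm0 : m ≠ 0 := hm0
  have hcont' : ContinuousAt (fun s : ℝ ↦ (!₂[-(s * m + s / m), m, 1] : ℝ³)) 0 :=
    continuousAt_vec3 (by fun_prop) (by fun_prop) (by fun_prop)
  have haxis : ∀ᶠ s in 𝓝 0, |f !₂[-(s * m + s / m), m, 1] - f !₂[0, 0, 1]| ≤ ε :=
    hcont'.eventually (p := fun v ↦ |f v - f !₂[0, 0, 1]| ≤ ε) (by simpa using hm)
  have hline : ContinuousAt (fun s : ℝ ↦ (s, s / m)) 0 := by fun_prop
  have hmeridian : ∀ᶠ s in 𝓝 0, |f !₂[1, s, s / m] - f !₂[1, s, 0]| ≤ ε :=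
    hline.eventually (by simpa using hf.eventually_sub_equator_le h)
  filter_upwards [haxis, hmeridian] with s hs hs'
  have hm1 := hm.self_of_nhds
  rcases eq_or_ne s 0 with rfl | hs0
  · rw [sub_self, abs_zero]
    linarith [(abs_nonneg _).trans hm1]
  · have := hf.sub_axis_eq hs0 hm0
    rw [abs_le] at *
    constructor <;> linarith

lemma IsFrameFunction.eventually_axis_of_pole (hf : IsFrameFunction f W)
    (h : ∀ᶠ v in 𝓝 !₂[0, 0, 1], |f v - f !₂[0, 0, 1]| ≤ ε) :
    ∀ᶠ v in 𝓝 !₂[1, 0, 0], |f v - f !₂[1, 0, 0]| ≤ 4 * ε := by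
  have hcoord (i : Fin 3) : ContinuousAt (fun v : ℝ³ ↦ v i) !₂[1, 0, 0] := by fun_prop
  have hratio (i : Fin 3) : ContinuousAt (fun v : ℝ³ ↦ v i / v 0) !₂[1, 0, 0] :=
    (hcoord i).div (hcoord 0) (by simp)
  have hequator : ∀ᶠ v : ℝ³ in 𝓝 !₂[1, 0, 0],
      |f !₂[1, v 1 / v 0, 0] - f !₂[1, 0, 0]| ≤ 3 * ε :=
    (hratio 1).eventually (by simpa using hf.eventually_equator_sub_axis_le h)
  have hmeridian : ∀ᶠ v : ℝ³ in 𝓝 !₂[1, 0, 0],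
      |f !₂[1, v 1 / v 0, v 2 / v 0] - f !₂[1, v 1 / v 0, 0]| ≤ ε :=
    ((hratio 1).prodMk (hratio 2)).eventually (by simpa using hf.eventually_sub_equator_le h)
  filter_upwards [hequator, hmeridian, (hcoord 0).eventually_ne (y := 0) (by simp)]
    with v hv hv' hv0
  have hscale : f v = f !₂[1, v 1 / v 0, v 2 / v 0] := by
    conv_lhs => rw [← vec3_eta v]
    exact hf.vec3_eq_of_smul hv0 (by simp) (by field) (by field)
  rw [hscale]
  exact (abs_sub_le _ _ _).trans (by linarith)

lemma IsFrameFunction.eventually_of_orthogonal (hf : IsFrameFunction f W) {p q : ℝ³}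
    (hp : ‖p‖ = 1) (hq : ‖q‖ = 1) (hpq : inner ℝ p q = 0) (h : ∀ᶠ v in 𝓝 p, |f v - f p| ≤ ε) :
    ∀ᶠ v in 𝓝 q, |f v - f q| ≤ 4 * ε := by
  obtain ⟨T, rfl, rfl⟩ := exists_linearIsometryEquiv hp hq hpq
  have := (hf.comp_isometry T).eventually_axis_of_pole (T.continuous.continuousAt.eventually h)
  have hmap : 𝓝 (T !₂[1, 0, 0]) = map T (𝓝 !₂[1, 0, 0]) := (T.toHomeomorph.map_nhds_eq _).symm
  rwa [hmap, eventually_map]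

lemma IsFrameFunction.exists_eventually_le (hf : IsFrameFunction f W) {k : ℝ}
    (hk : ∀ v, v ≠ 0 → k ≤ f v) (hε : 0 < ε) :
    ∃ p : ℝ³, ‖p‖ = 1 ∧ ∀ᶠ v in 𝓝 p, |f v - f p| ≤ ε := by
  let S := f '' {0}ᶜ
  have hS : BddBelow S := ⟨k, Set.forall_mem_image.2 hk⟩
  have hinf : ∀ v, v ≠ 0 → 0 ≤ f v - sInf S := fun v hv ↦
    sub_nonneg.2 (csInf_le hS (Set.mem_image_of_mem f hv))
  obtain ⟨_, ⟨p, hp, rfl⟩, hlt⟩ :=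
    exists_lt_of_csInf_lt (s := S) (.image f ⟨_, vec3_ne_zero (x := 1) (y := 0) (z := 0) (by simp)⟩)
      (show sInf S < sInf S + ε / 12 by linarith)
  have hp0 : p ≠ 0 := hp
  rw [← hf.apply_inv_norm_smul hp0] at hlt
  have hnorm : ‖‖p‖⁻¹ • p‖ = 1 := by simp [norm_smul, hp0]
  refine ⟨_, hnorm, ?_⟩
  filter_upwards [(hf.sub_const _).eventually_le hinf hnorm (half_pos hε),
    eventually_ne_nhds (norm_ne_zero_iff.1 (hnorm.trans_ne one_ne_zero))] with v hv hv0
  have := hinf v hv0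
  have := hinf _ (norm_ne_zero_iff.1 (hnorm.trans_ne one_ne_zero))
  rw [abs_le]
  constructor <;> linarith

/- Continuity spreads from a point where `f` nearly attains its infimum to every point, through a
common normal. -/
lemma IsFrameFunction.continuousAt (hf : IsFrameFunction f W) {k : ℝ}
    (hk : ∀ v, v ≠ 0 → k ≤ f v) {v : ℝ³} (hv : v ≠ 0) : ContinuousAt f v := by
  have hunit : ∀ q : ℝ³, ‖q‖ = 1 → ContinuousAt f q := by
    intro q hq
    rw [Metric.continuousAt_iff']
    intro ε hε
    obtain ⟨p, hp, hosc⟩ := hf.exists_eventually_le hk (show 0 < ε / 32 by positivity)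
    obtain ⟨r, hr, hpr, hqr⟩ := exists_norm_eq_one_inner_eq_zero (𝕜 := ℝ) (by simp) p q
    rw [real_inner_comm] at hqr
    filter_upwards [hf.eventually_of_orthogonal hr hq hqr
      (hf.eventually_of_orthogonal hp hr hpr hosc)] with u hu
    rw [Real.dist_eq]
    linarith
  have hscale : f = fun u ↦ f (‖v‖⁻¹ • u) :=
    funext fun u ↦ (hf.smul _ (inv_ne_zero (norm_ne_zero_iff.2 hv)) u).symm
  rw [hscale]
  exact ContinuousAt.comp' (hunit _ (by simp [norm_smul, hv])) (by fun_prop)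

end Oscillation

/-! ### Rotational symmetry about an extremal point -/

/- The difference from the linear function doubles under one of `a ↦ 2 * a` and
`a ↦ 2 * a - 1`, so its supremum is at most half of itself. -/
lemma eq_mul_apply_one_of_map_add {χ : ℝ → ℝ} {B : ℝ}
    (hadd : ∀ a b, 0 ≤ a → 0 ≤ b → a + b ≤ 1 → χ (a + b) = χ a + χ b)
    (hB : ∀ a ∈ Set.Icc (0 : ℝ) 1, |χ a| ≤ B) {a : ℝ} (ha : a ∈ Set.Icc (0 : ℝ) 1) :
    χ a = a * χ 1 := by
  let δ : ℝ → ℝ := fun a ↦ χ a - a * χ 1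
  let S := (|δ ·|) '' Set.Icc 0 1
  have hbdd : BddAbove S := by
    refine ⟨B + |χ 1|, Set.forall_mem_image.2 fun a ha ↦ (abs_sub _ _).trans ?_⟩
    rw [abs_mul, abs_of_nonneg ha.1]
    exact add_le_add (hB a ha) (mul_le_of_le_one_left (abs_nonneg _) ha.2)
  have hdouble : ∀ a ∈ Set.Icc (0 : ℝ) 1, ∃ b ∈ Set.Icc (0 : ℝ) 1, δ b = 2 * δ a := by
    rintro a ⟨ha0, ha1⟩
    rcases le_total a (1 / 2) with h | h
    · exact ⟨a + a, ⟨by linarith, by linarith⟩, by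
        linear_combination hadd a a ha0 ha0 (by linarith)⟩
    · have hone := hadd a (1 - a) ha0 (by linarith) (by linarith)
      have hsplit := hadd (1 - a) (a - (1 - a)) (by linarith) (by linarith) (by linarith)
      rw [add_sub_cancel] at hone hsplit
      exact ⟨a - (1 - a), ⟨by linarith, by linarith⟩, by linear_combination hone - hsplit⟩
  have hhalf : sSup S ≤ sSup S / 2 := by
    refine csSup_le ⟨_, Set.mem_image_of_mem _ ha⟩ (Set.forall_mem_image.2 fun a ha ↦ ?_)
    obtain ⟨b, hb, hba⟩ := hdouble a ha
    have := le_csSup hbdd (Set.mem_image_of_mem _ hb)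
    rw [hba, abs_mul, abs_two] at this
    linarith
  have hδ : |δ a| ≤ 0 := (le_csSup hbdd (Set.mem_image_of_mem _ ha)).trans (by linarith)
  exact sub_eq_zero.1 (abs_nonpos_iff.1 hδ)

section Zonal

variable {f g : ℝ³ → ℝ} {W c x y z : ℝ}

/- Iterate the step from `w` to `w * (1 + t * I)`, using `(1 + α * I / n) ^ n → exp (α * I)`. -/
lemma IsFrameFunction.gnomonic_le_mul_exp (hg : IsFrameFunction g W) (hc : EquatorConst g c)
    (hmin : ∀ v, v ≠ 0 → g !₂[0, 0, 1] ≤ g v) (w : ℂ) (α : ℝ) :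
    g (gnomonic w) ≤ g (gnomonic (w * Complex.exp (α * Complex.I))) := by
  have hstep (w : ℂ) (t : ℝ) : g (gnomonic w) ≤ g (gnomonic (w * (1 + t * Complex.I))) := by
    have := hg.gnomonic_le_mul_one_add hc (fun v hv ↦ hg.le_of_equatorConst hc hmin hv) w t
    linarith
  have hpow (t : ℝ) (n : ℕ) :
      g (gnomonic w) ≤ g (gnomonic (w * (1 + t * Complex.I) ^ n)) := by
    induction n with
    | zero => simp
    | succ n ih =>
      rw [pow_succ, ← mul_assoc]
      exact ih.trans (hstep _ t)
  have hcont : Continuous fun w ↦ g (gnomonic w) := continuous_iff_continuousAt.2 fun w ↦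
    (hg.continuousAt hmin (gnomonic_ne_zero w)).comp' (continuousAt_vec3
      Complex.continuous_re.continuousAt Complex.continuous_im.continuousAt continuousAt_const)
  refine ge_of_tendsto' ((hcont.tendsto _).comp
    ((Complex.tendsto_one_add_div_pow_exp (α * Complex.I)).const_mul w)) fun n ↦ ?_
  simpa only [Function.comp_apply, Complex.ofReal_div, Complex.ofReal_natCast,
    div_mul_eq_mul_div] using hpow (α / n) n

lemma IsFrameFunction.gnomonic_norm (hg : IsFrameFunction g W) (hc : EquatorConst g c)
    (hmin : ∀ v, v ≠ 0 → g !₂[0, 0, 1] ≤ g v) (w : ℂ) : g (gnomonic ‖w‖) = g (gnomonic w) := by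
  apply le_antisymm
  · simpa using hg.gnomonic_le_mul_exp hc hmin ‖w‖ w.arg
  · have := hg.gnomonic_le_mul_exp hc hmin w (-w.arg)
    have hw : w * Complex.exp ((-w.arg : ℝ) * Complex.I) = ‖w‖ := by
      rw [Complex.ofReal_neg, neg_mul, Complex.exp_neg, ← div_eq_mul_inv,
        div_eq_iff (Complex.exp_ne_zero _), Complex.norm_mul_exp_arg_mul_I]
    rwa [hw] at this

lemma IsFrameFunction.vec3_eq_of_sq_add_sq_eq (hg : IsFrameFunction g W) (hc : EquatorConst g c)
    (hmin : ∀ v, v ≠ 0 → g !₂[0, 0, 1] ≤ g v) {x' y' : ℝ} (hne : x ^ 2 + y ^ 2 + z ^ 2 ≠ 0)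
    (h : x ^ 2 + y ^ 2 = x' ^ 2 + y' ^ 2) : g !₂[x, y, z] = g !₂[x', y', z] := by
  rcases eq_or_ne z 0 with rfl | hz
  · have hxy : x ^ 2 + y ^ 2 ≠ 0 := by simpa using hne
    rw [hc x y hxy, hc x' y' (h ▸ hxy)]
  have hscale (x y : ℝ) : g !₂[x, y, z] = g (gnomonic ⟨x / z, y / z⟩) :=
    hg.vec3_eq_of_smul hz (by field) (by field) (by ring)
  have hnorm : ‖(⟨x / z, y / z⟩ : ℂ)‖ = ‖(⟨x' / z, y' / z⟩ : ℂ)‖ := by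
    rw [Complex.norm_def, Complex.norm_def, Complex.normSq_mk, Complex.normSq_mk]
    congr 1
    field_simp
    exact h
  rw [hscale, hscale, ← hg.gnomonic_norm hc hmin, hnorm, hg.gnomonic_norm hc hmin]

/- Compare the frames `(p, 0, q), (0, 1, 0), (q, 0, -p)` and
`(s * p / q, t / q, s), (t * p / q, -s / q, t), (q, 0, -p)`, where `q ^ 2 = s ^ 2 + t ^ 2`. -/
lemma IsFrameFunction.apply_sqrt_add (hg : IsFrameFunction g W) (hc : EquatorConst g c)
    (hmin : ∀ v, v ≠ 0 → g !₂[0, 0, 1] ≤ g v) {a b : ℝ} (ha : 0 ≤ a) (hb : 0 ≤ b)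
    (hab : a + b ≤ 1) :
    g !₂[√(1 - (a + b)), 0, √(a + b)] + c = g !₂[√(1 - a), 0, √a] + g !₂[√(1 - b), 0, √b] := by
  rcases (add_nonneg ha hb).eq_or_lt with h0 | hpos
  · obtain ⟨rfl, rfl⟩ : a = 0 ∧ b = 0 := by constructor <;> linarith
    simp [hc 1 0 (by simp)]
  have hp : √(1 - (a + b)) ^ 2 = 1 - (a + b) := Real.sq_sqrt (by linarith)
  have hq : √(a + b) ^ 2 = a + b := Real.sq_sqrt hpos.le
  have hs : √a ^ 2 = a := Real.sq_sqrt ha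
  have ht : √b ^ 2 = b := Real.sq_sqrt hb
  have ha' : √(1 - a) ^ 2 = 1 - a := Real.sq_sqrt (by linarith)
  have hb' : √(1 - b) ^ 2 = 1 - b := Real.sq_sqrt (by linarith)
  have hq0 : √(a + b) ≠ 0 := (Real.sqrt_pos.2 hpos).ne'
  set p := √(1 - (a + b))
  set q := √(a + b)
  set s := √a
  set t := √b
  have hnormal : q ^ 2 + 0 ^ 2 + (-p) ^ 2 ≠ 0 := by nlinarith
  have hs1 : (s * p / q) ^ 2 + (t / q) ^ 2 = √(1 - a) ^ 2 + 0 ^ 2 := by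
    simp only [div_pow, mul_pow, hp, hq, hs, ht, ha']
    field
  have ht1 : (t * p / q) ^ 2 + (-s / q) ^ 2 = √(1 - b) ^ 2 + 0 ^ 2 := by
    simp only [div_pow, mul_pow, neg_sq, hp, hq, hs, ht, hb']
    field
  have hs0 : (s * p / q) ^ 2 + (t / q) ^ 2 + s ^ 2 ≠ 0 := by nlinarith
  have ht0 : (t * p / q) ^ 2 + (-s / q) ^ 2 + t ^ 2 ≠ 0 := by nlinarith
  have horth : s * p / q * (t * p / q) + t / q * (-s / q) + s * t = 0 := by
    field_simp
    linear_combination s * t * (hp + hq)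
  have hstraight := hg.vec3_add_add (x₁ := p) (y₁ := 0) (z₁ := q) (x₂ := 0) (y₂ := 1) (z₂ := 0)
    (by nlinarith) (by simp) hnormal (by ring) (by ring) (by ring)
  have htilted := hg.vec3_add_add hs0 ht0 hnormal horth (by field) (by field)
  rw [hc 0 1 (by simp)] at hstraight
  rw [hg.vec3_eq_of_sq_add_sq_eq hc hmin hs0 hs1,
    hg.vec3_eq_of_sq_add_sq_eq hc hmin ht0 ht1] at htilted
  linarith

lemma IsFrameFunction.vec3_eq_of_equatorConst (hg : IsFrameFunction g W) (hc : EquatorConst g c)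
    (hmin : ∀ v, v ≠ 0 → g !₂[0, 0, 1] ≤ g v) (h : x ^ 2 + y ^ 2 + z ^ 2 = 1) :
    g !₂[x, y, z] = c + (g !₂[0, 0, 1] - c) * z ^ 2 := by
  let χ : ℝ → ℝ := fun l ↦ c - g !₂[√(1 - l), 0, √l]
  have hadd : ∀ a b, 0 ≤ a → 0 ≤ b → a + b ≤ 1 → χ (a + b) = χ a + χ b := fun a b ha hb hab ↦ by
    linear_combination -hg.apply_sqrt_add hc hmin ha hb hab
  have hB : ∀ a ∈ Set.Icc (0 : ℝ) 1, |χ a| ≤ c - g !₂[0, 0, 1] := by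
    intro a ha
    have hne : (!₂[√(1 - a), 0, √a] : ℝ³) ≠ 0 := vec3_ne_zero (by
      rw [Real.sq_sqrt ha.1, Real.sq_sqrt (sub_nonneg.2 ha.2)]
      norm_num)
    have := hg.le_of_equatorConst hc hmin hne
    have := hmin _ hne
    rw [abs_le]
    constructor <;> linarith
  have hz : 0 ≤ 1 - z ^ 2 := by nlinarith
  have hlinear : χ (z ^ 2) = z ^ 2 * χ 1 :=
    eq_mul_apply_one_of_map_add hadd hB ⟨sq_nonneg z, sub_nonneg.1 hz⟩
  have hone : χ 1 = c - g !₂[0, 0, 1] := by simp [χ]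
  have habs : g !₂[x, y, z] = g !₂[x, y, |z|] := by
    rcases abs_choice z with hz' | hz'
    · rw [hz']
    · rw [hz', ← hg.vec3_eq_of_smul (t := -1) (x' := -x) (y' := -y) (by norm_num) (by ring)
        (by ring) (neg_eq_neg_one_mul z)]
      exact hg.vec3_eq_of_sq_add_sq_eq hc hmin (by simp [h]) (by ring)
  have hcoord : g !₂[x, y, z] = g !₂[√(1 - z ^ 2), 0, √(z ^ 2)] := by
    rw [habs, Real.sqrt_sq_eq_abs]
    exact hg.vec3_eq_of_sq_add_sq_eq hc hmin (by simp [h]) (by rw [Real.sq_sqrt hz]; linarith)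
  rw [hcoord]
  linear_combination -hlinear - z ^ 2 * hone

lemma IsFrameFunction.add_quarterTurn_eq_of_pole_le (hf : IsFrameFunction f W)
    (hmin : ∀ v, v ≠ 0 → f !₂[0, 0, 1] ≤ f v) (h : x ^ 2 + y ^ 2 + z ^ 2 = 1) :
    f !₂[x, y, z] + f !₂[-y, x, z]
      = 2 * f !₂[0, 0, 1] * z ^ 2 + (W - f !₂[0, 0, 1]) * (x ^ 2 + y ^ 2) := by
  have hzonal := (isFrameFunction_symmetrize hf).vec3_eq_of_equatorConst
    (equatorConst_symmetrize hf) (fun v hv ↦ by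
      rw [symmetrize_pole, two_mul]
      exact add_le_add (hmin v hv) (hmin _ (by simpa using hv))) h
  rw [symmetrize_pole, symmetrize, quarterTurn_vec3] at hzonal
  linear_combination hzonal - (W - f !₂[0, 0, 1]) * h

lemma IsFrameFunction.add_quarterTurn_eq_of_le_pole (hf : IsFrameFunction f W)
    (hmax : ∀ v, v ≠ 0 → f v ≤ f !₂[0, 0, 1]) (h : x ^ 2 + y ^ 2 + z ^ 2 = 1) :
    f !₂[x, y, z] + f !₂[-y, x, z]
      = 2 * f !₂[0, 0, 1] * z ^ 2 + (W - f !₂[0, 0, 1]) * (x ^ 2 + y ^ 2) := by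
  linear_combination
    -hf.neg.add_quarterTurn_eq_of_pole_le (fun v hv ↦ neg_le_neg (hmax v hv)) h

end Zonal

/-! ### Frame functions on `ℝ³` are quadratic -/

section Odd

lemma sq_eq_sq_of_one_third_le {x y z : ℝ} (h : x ^ 2 + y ^ 2 + z ^ 2 = 1)
    (h₁ : 1 / 3 ≤ (x * y + y * z + z * x) ^ 2) (h₂ : 1 / 3 ≤ (x * y - y * z - z * x) ^ 2)
    (h₃ : 1 / 3 ≤ (-(x * y) - y * z + z * x) ^ 2) (h₄ : 1 / 3 ≤ (-(x * y) + y * z - z * x) ^ 2) :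
    y ^ 2 = z ^ 2 := by
  have hsum : 1 / 3 ≤ x ^ 2 * y ^ 2 + y ^ 2 * z ^ 2 + z ^ 2 * x ^ 2 := by linarith
  have hone : (x ^ 2 + y ^ 2 + z ^ 2) ^ 2 = 1 := by rw [h, one_pow]
  have hyz : (y ^ 2 - z ^ 2) ^ 2 ≤ 0 := by
    nlinarith [hsum, hone, sq_nonneg (x ^ 2 - y ^ 2), sq_nonneg (z ^ 2 - x ^ 2)]
  exact sub_eq_zero.1 (pow_eq_zero_iff two_ne_zero |>.1 (hyz.antisymm (sq_nonneg _)))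

variable {d : ℝ³ → ℝ} {x y z : ℝ}

lemma IsFrameFunction.one_third_le_inner_sq (hd : IsFrameFunction d 0) {p s : ℝ³}
    (hp : ‖p‖ = 1) (hs : ‖s‖ = 1) (hmax : ∀ v, v ≠ 0 → d v ≤ d p) (hmin : ∀ v, v ≠ 0 → -d p ≤ d v)
    (hpos : 0 < d p) (hds : d s = d p) : 1 / 3 ≤ inner ℝ p s ^ 2 := by
  obtain ⟨T, rfl⟩ := exists_linearIsometryEquiv_pole hp
  obtain ⟨u, rfl⟩ := T.surjective s
  have hu : u 0 ^ 2 + u 1 ^ 2 + u 2 ^ 2 = 1 := by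
    rw [← norm_sq_vec3, vec3_eta, ← T.norm_map, hs, one_pow]
  have hsum := (hd.comp_isometry T).add_quarterTurn_eq_of_le_pole
    (fun v hv ↦ hmax _ (by simpa using hv)) hu
  have hlow := hmin (T !₂[-u 1, u 0, u 2]) (by
    rw [Ne, map_eq_zero_iff _ T.injective]
    exact vec3_ne_zero (by rw [neg_sq, add_comm (u 1 ^ 2), hu]; exact one_ne_zero))
  rw [vec3_eta, hds] at hsum
  rw [T.inner_map_map, ← vec3_eta u, inner_vec3]
  nlinarith

lemma IsFrameFunction.exists_extrema {f : ℝ³ → ℝ} {W k : ℝ} (hf : IsFrameFunction f W)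
    (hk : ∀ v, v ≠ 0 → k ≤ f v) :
    ∃ p q : ℝ³, ‖p‖ = 1 ∧ ‖q‖ = 1 ∧ (∀ v, v ≠ 0 → f v ≤ f p) ∧ ∀ v, v ≠ 0 → f q ≤ f v := by
  have hne : (Metric.sphere (0 : ℝ³) 1).Nonempty := NormedSpace.sphere_nonempty.2 zero_le_one
  have hcont : ContinuousOn f (Metric.sphere 0 1) := fun v hv ↦
    (hf.continuousAt hk (ne_zero_of_mem_unit_sphere ⟨v, hv⟩)).continuousWithinAt
  have hmem {v : ℝ³} (hv : v ≠ 0) : ‖v‖⁻¹ • v ∈ Metric.sphere (0 : ℝ³) 1 := by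
    simp [norm_smul, hv]
  obtain ⟨p, hp, hmax⟩ := (isCompact_sphere 0 1).exists_isMaxOn hne hcont
  obtain ⟨q, hq, hmin⟩ := (isCompact_sphere 0 1).exists_isMinOn hne hcont
  refine ⟨p, q, by simpa using hp, by simpa using hq, fun v hv ↦ ?_, fun v hv ↦ ?_⟩
  · simpa [hf.apply_inv_norm_smul hv] using hmax (hmem hv)
  · simpa [hf.apply_inv_norm_smul hv] using hmin (hmem hv)

/-- A frame function of weight zero that changes sign under the right-angled rotations about the
first and the third axis: the error term between a frame function and the quadratic form with the
same values on the coordinate axes. -/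
structure IsOddFrameFunction (d : ℝ³ → ℝ) : Prop extends IsFrameFunction d 0 where
  turn_fst : ∀ x y z : ℝ, x ^ 2 + y ^ 2 + z ^ 2 = 1 → d !₂[x, -z, y] = -d !₂[x, y, z]
  turn_trd : ∀ x y z : ℝ, x ^ 2 + y ^ 2 + z ^ 2 = 1 → d !₂[-y, x, z] = -d !₂[x, y, z]

namespace IsOddFrameFunction

lemma flip_fst (hd : IsOddFrameFunction d) (h : x ^ 2 + y ^ 2 + z ^ 2 = 1) :
    d !₂[x, -y, -z] = d !₂[x, y, z] := by
  rw [hd.turn_fst x (-z) y (by linarith), hd.turn_fst x y z h, neg_neg]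

lemma flip_trd (hd : IsOddFrameFunction d) (h : x ^ 2 + y ^ 2 + z ^ 2 = 1) :
    d !₂[-x, -y, z] = d !₂[x, y, z] := by
  rw [hd.turn_trd (-y) x z (by linarith), hd.turn_trd x y z h, neg_neg]

lemma cycle (hd : IsOddFrameFunction d) (h : x ^ 2 + y ^ 2 + z ^ 2 = 1) :
    d !₂[y, z, x] = d !₂[x, y, z] := by
  rw [← hd.flip_trd (by linarith), hd.turn_fst (-y) x z (by linarith), hd.turn_trd x y z h, neg_neg]

lemma apply_diag (hd : IsOddFrameFunction d) (h : x ^ 2 + z ^ 2 + z ^ 2 = 1) :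
    d !₂[x, z, z] = 0 := by
  have hodd : d !₂[x, -z, z] = -d !₂[x, z, z] := hd.turn_fst x z z h
  have heven : d !₂[x, -z, z] = d !₂[x, z, z] := by
    rw [← hd.flip_fst h, ← hd.flip_trd (x := x) (y := -z) (by linarith), neg_neg]
    exact hd.vec3_eq_of_smul (t := -1) (by norm_num) (by ring) (by ring) (by ring)
  linarith

lemma apply_eq_zero_of_sq_eq_sq (hd : IsOddFrameFunction d) (h : x ^ 2 + y ^ 2 + z ^ 2 = 1)
    (hyz : y ^ 2 = z ^ 2) : d !₂[x, y, z] = 0 := by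
  rcases sq_eq_sq_iff_eq_or_eq_neg.1 hyz with rfl | rfl
  · exact hd.apply_diag h
  · rw [hd.turn_fst x z z (by linarith), hd.apply_diag (by linarith), neg_zero]

lemma exists_apply_eq_neg (hd : IsOddFrameFunction d) {v : ℝ³} (hv : v ≠ 0) :
    ∃ w, w ≠ 0 ∧ d w = -d v := by
  obtain ⟨u, hu⟩ : ∃ u, u = ‖v‖⁻¹ • v := ⟨_, rfl⟩
  have hnorm : u 0 ^ 2 + u 1 ^ 2 + u 2 ^ 2 = 1 := by
    rw [← norm_sq_vec3, vec3_eta]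
    simp [hu, norm_smul, hv]
  refine ⟨!₂[u 0, -u 2, u 1], vec3_ne_zero (by nlinarith), ?_⟩
  rw [hd.turn_fst _ _ _ hnorm, vec3_eta, hu, hd.apply_inv_norm_smul hv]

/- A positive maximum at `p = (x, y, z)` would also be attained at `(±y, ±z, ±x)`, for an even
number of minus signs, which bounds the four inner products with `p`. -/
lemma apply_le_zero (hd : IsOddFrameFunction d) {p : ℝ³} (hp : ‖p‖ = 1)
    (hmax : ∀ v, v ≠ 0 → d v ≤ d p) : d p ≤ 0 := by
  by_contra! hpos
  have hmin : ∀ v, v ≠ 0 → -d p ≤ d v := by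
    intro v hv
    obtain ⟨w, hw, hvw⟩ := hd.exists_apply_eq_neg hv
    rw [neg_le, ← hvw]
    exact hmax w hw
  obtain ⟨x, y, z, rfl⟩ : ∃ x y z, p = !₂[x, y, z] := ⟨_, _, _, (vec3_eta p).symm⟩
  have hxyz : x ^ 2 + y ^ 2 + z ^ 2 = 1 := by rw [← norm_sq_vec3, hp, one_pow]
  have hyzx : y ^ 2 + z ^ 2 + x ^ 2 = 1 := by linarith
  have hinner {a b c : ℝ} (h : a ^ 2 + b ^ 2 + c ^ 2 = 1)
      (hd' : d !₂[a, b, c] = d !₂[x, y, z]) : 1 / 3 ≤ (x * a + y * b + z * c) ^ 2 := by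
    rw [← inner_vec3]
    exact hd.one_third_le_inner_sq hp (norm_vec3_eq_one h) hmax hmin hpos hd'
  have hcycle := hd.cycle hxyz
  have h₁ := hinner hyzx hcycle
  have h₂ := hinner (by linarith) ((hd.flip_fst hyzx).trans hcycle)
  have h₃ := hinner (by linarith) ((hd.flip_trd hyzx).trans hcycle)
  have h₄ := hinner (a := -y) (b := z) (c := -x) (by linarith) (by
    rw [← hcycle, ← hd.flip_trd hyzx, ← hd.flip_fst (y := -z) (by linarith), neg_neg])
  exact hpos.ne' (hd.apply_eq_zero_of_sq_eq_sq hxyz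
    (sq_eq_sq_of_one_third_le hxyz (by linarith) (by linarith) (by linarith) (by linarith)))

lemma apply_eq_zero (hd : IsOddFrameFunction d) {k : ℝ} (hk : ∀ v, v ≠ 0 → k ≤ d v) {v : ℝ³}
    (hv : v ≠ 0) : d v = 0 := by
  obtain ⟨p, -, hp, -, hmax, -⟩ := hd.exists_extrema hk
  have hnonpos {v : ℝ³} (hv : v ≠ 0) : d v ≤ 0 := (hmax v hv).trans (hd.apply_le_zero hp hmax)
  obtain ⟨w, hw, hvw⟩ := hd.exists_apply_eq_neg hv
  exact (hnonpos hv).antisymm (neg_nonpos.1 (hvw ▸ hnonpos hw))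

end IsOddFrameFunction

end Odd

section Quadratic

/-- The cyclic permutation of the coordinates. -/
noncomputable def cyclicShift : ℝ³ ≃ₗᵢ[ℝ] ℝ³ :=
  LinearIsometryEquiv.piLpCongrLeft 2 ℝ ℝ (finRotate 3)

lemma cyclicShift_vec3 (x y z : ℝ) : cyclicShift !₂[x, y, z] = !₂[z, x, y] := by
  ext i
  fin_cases i <;> rfl

/-- The diagonal operator whose eigenvalues are the values of `f` on the coordinate axes. -/
noncomputable def axisForm (f : ℝ³ → ℝ) : ℝ³ →ₗ[ℝ] ℝ³ :=
  (Matrix.diagonal ![f !₂[1, 0, 0], f !₂[0, 1, 0], f !₂[0, 0, 1]]).toEuclideanLin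

variable {f : ℝ³ → ℝ} {W k : ℝ}

lemma inner_axisForm (f : ℝ³ → ℝ) (x y z : ℝ) :
    inner ℝ (!₂[x, y, z] : ℝ³) (axisForm f !₂[x, y, z])
      = f !₂[1, 0, 0] * x ^ 2 + f !₂[0, 1, 0] * y ^ 2 + f !₂[0, 0, 1] * z ^ 2 := by
  simp only [axisForm, toLpLin_toLp, toLin'_apply, PiLp.inner_apply, mulVec_diagonal,
    RCLike.inner_apply, conj_trivial, Fin.sum_univ_three, cons_val]
  ring

lemma IsFrameFunction.sum_axes (hf : IsFrameFunction f W) :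
    f !₂[1, 0, 0] + f !₂[0, 1, 0] + f !₂[0, 0, 1] = W :=
  hf.vec3_add_add (by simp) (by simp) (by simp) (by simp) (by simp) (by simp)

lemma IsFrameFunction.trace_axisForm (hf : IsFrameFunction f W) :
    LinearMap.trace ℝ ℝ³ (axisForm f) = W := by
  rw [← hf.sum_axes, LinearMap.trace_eq_sum_inner _ (EuclideanSpace.basisFun (Fin 3) ℝ)]
  simp [axisForm, Fin.sum_univ_three, PiLp.inner_apply, Matrix.mulVec_diagonal]

/- With a maximum at the first and a minimum at the third axis, the deviation from the quadratic
form is pinned down in two directions. -/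
lemma IsFrameFunction.isOddFrameFunction_sub (hf : IsFrameFunction f W)
    (hmax : ∀ v, v ≠ 0 → f v ≤ f !₂[1, 0, 0]) (hmin : ∀ v, v ≠ 0 → f !₂[0, 0, 1] ≤ f v) :
    IsOddFrameFunction fun v ↦ f v + -(inner ℝ v (axisForm f v) / ‖v‖ ^ 2) where
  toIsFrameFunction := by
    simpa [hf.trace_axisForm] using hf.add (isFrameFunction_inner_div_norm_sq (axisForm f)).neg
  turn_fst x y z h := by
    have hturn := (hf.comp_isometry cyclicShift).add_quarterTurn_eq_of_le_pole
      (x := y) (y := z) (z := x) (fun v hv ↦ by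
        rw [cyclicShift_vec3]
        exact hmax _ (by simpa using hv)) (by linarith)
    simp only [cyclicShift_vec3] at hturn
    simp only [norm_sq_vec3, inner_axisForm, neg_sq, h, add_right_comm (x ^ 2) (z ^ 2)]
    linear_combination hturn - (y ^ 2 + z ^ 2) * hf.sum_axes
  turn_trd x y z h := by
    have hturn := hf.add_quarterTurn_eq_of_pole_le hmin h
    simp only [norm_sq_vec3, inner_axisForm, neg_sq, h, add_comm (y ^ 2) (x ^ 2)]
    linear_combination hturn - (x ^ 2 + y ^ 2) * hf.sum_axes

lemma IsFrameFunction.norm_sq_mul_eq_inner_axisForm (hf : IsFrameFunction f W)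
    (hmax : ∀ v, v ≠ 0 → f v ≤ f !₂[1, 0, 0]) (hmin : ∀ v, v ≠ 0 → f !₂[0, 0, 1] ≤ f v)
    (v : ℝ³) : ‖v‖ ^ 2 * f v = inner ℝ v (axisForm f v) := by
  rcases eq_or_ne v 0 with rfl | hv
  · simp
  have hpos {v : ℝ³} (hv : v ≠ 0) : 0 < ‖v‖ ^ 2 := pow_pos (norm_pos_iff.2 hv) 2
  have hform : ∀ v, v ≠ 0 → inner ℝ v (axisForm f v) / ‖v‖ ^ 2 ≤ f !₂[1, 0, 0] := by
    intro v hv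
    obtain ⟨x, y, z, rfl⟩ : ∃ x y z, v = !₂[x, y, z] := ⟨_, _, _, (vec3_eta v).symm⟩
    have h₂ := hmax !₂[0, 1, 0] (by simp)
    have h₃ := hmax !₂[0, 0, 1] (by simp)
    rw [div_le_iff₀ (hpos hv), inner_axisForm, norm_sq_vec3]
    nlinarith [mul_le_mul_of_nonneg_right h₂ (sq_nonneg y),
      mul_le_mul_of_nonneg_right h₃ (sq_nonneg z)]
  have hzero := (hf.isOddFrameFunction_sub hmax hmin).apply_eq_zero
    (k := f !₂[0, 0, 1] - f !₂[1, 0, 0]) (fun v hv ↦ by linarith [hmin v hv, hform v hv]) hv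
  rw [← sub_eq_add_neg, sub_eq_zero] at hzero
  rw [hzero, mul_div_cancel₀ _ (hpos hv).ne']

lemma IsFrameFunction.exists_orthogonal_extrema (hf : IsFrameFunction f W)
    (hk : ∀ v, v ≠ 0 → k ≤ f v) : ∃ p q : ℝ³, ‖p‖ = 1 ∧ ‖q‖ = 1 ∧ inner ℝ q p = 0 ∧
      (∀ v, v ≠ 0 → f v ≤ f p) ∧ ∀ v, v ≠ 0 → f q ≤ f v := by
  obtain ⟨p, q, hp, hq, hmax, hmin⟩ := hf.exists_extrema hk
  obtain ⟨n, hn, hpn, hqn⟩ := exists_norm_eq_one_inner_eq_zero (𝕜 := ℝ) (by simp) p q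
  obtain ⟨p', hp', hpp', hnp'⟩ := exists_norm_eq_one_inner_eq_zero (𝕜 := ℝ) (by simp) p n
  obtain ⟨q', hq', hqq', hnq'⟩ := exists_norm_eq_one_inner_eq_zero (𝕜 := ℝ) (by simp) q n
  have hne {v : ℝ³} (hv : ‖v‖ = 1) : v ≠ 0 := ne_zero_of_norm_ne_zero (by simp [hv])
  have hsump := hf.add_add_eq_of_orthogonal (hne hp) (hne hn) (hne hp') hpn hpp' hnp'
  have hsumq := hf.add_add_eq_of_orthogonal (hne hq) (hne hn) (hne hq') hqn hqq' hnq'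
  have hle : f p' ≤ f q := by linarith [hmax q' (hne hq')]
  exact ⟨p, p', hp, hp', by rwa [real_inner_comm], hmax, fun v hv ↦ hle.trans (hmin v hv)⟩

theorem IsFrameFunction.exists_linearMap (hf : IsFrameFunction f W)
    (hk : ∀ v, v ≠ 0 → k ≤ f v) :
    ∃ A : ℝ³ →ₗ[ℝ] ℝ³, ∀ v, ‖v‖ ^ 2 * f v = inner ℝ v (A v) := by
  obtain ⟨p, q, hp, hq, hqp, hmax, hmin⟩ := hf.exists_orthogonal_extrema hk
  obtain ⟨T, rfl, rfl⟩ := exists_linearIsometryEquiv hq hp hqp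
  have hdiag := (hf.comp_isometry T).norm_sq_mul_eq_inner_axisForm
    (fun v hv ↦ hmax _ (by simpa using hv)) (fun v hv ↦ hmin _ (by simpa using hv))
  refine ⟨T.toLinearMap ∘ₗ axisForm (fun v ↦ f (T v)) ∘ₗ T.symm.toLinearMap, fun v ↦ ?_⟩
  have hv := hdiag (T.symm v)
  rw [T.symm.norm_map, T.apply_symm_apply, ← T.inner_map_map, T.apply_symm_apply] at hv
  exact hv

end Quadratic

/-! ### Hermitian forms from orthonormal pairs -/

section Sesquilinear

open ComplexConjugate

/-- `F` has the homogeneity of the diagonal of a Hermitian form, and is a quadratic form on the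
*real* span of every orthonormal pair. -/
structure IsOrthoquadratic {V : Type*} [NormedAddCommGroup V] [InnerProductSpace ℂ V]
    (F : V → ℝ) : Prop where
  smul : ∀ (z : ℂ) v, F (z • v) = ‖z‖ ^ 2 * F v
  exists_cross_term : ∀ a b, ‖a‖ = 1 → ‖b‖ = 1 → inner ℂ a b = 0 → ∃ C : ℝ, ∀ s t : ℝ,
    F (s • a + t • b) = s ^ 2 * F a + t ^ 2 * F b + s * t * C

namespace IsOrthoquadratic

variable {V : Type*} [NormedAddCommGroup V] [InnerProductSpace ℂ V] {F : V → ℝ} {a b : V}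

lemma apply_zero (hF : IsOrthoquadratic F) : F 0 = 0 := by
  simpa using hF.smul 0 0

lemma real_smul (hF : IsOrthoquadratic F) (t : ℝ) (v : V) : F (t • v) = t ^ 2 * F v := by
  rw [← Complex.coe_smul, hF.smul, Complex.norm_real, Real.norm_eq_abs, sq_abs]

lemma smul_of_norm_eq_one (hF : IsOrthoquadratic F) {ζ : ℂ} (hζ : ‖ζ‖ = 1) (v : V) :
    F (ζ • v) = F v := by
  rw [hF.smul, hζ, one_pow, one_mul]

lemma exists_cross_term_of_inner_eq_zero (hF : IsOrthoquadratic F) (hab : inner ℂ a b = 0) :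
    ∃ C : ℝ, ∀ s t : ℝ, F (s • a + t • b) = s ^ 2 * F a + t ^ 2 * F b + s * t * C := by
  rcases eq_or_ne a 0 with rfl | ha
  · exact ⟨0, fun s t ↦ by simp [hF.real_smul, hF.apply_zero]⟩
  rcases eq_or_ne b 0 with rfl | hb
  · exact ⟨0, fun s t ↦ by simp [hF.real_smul, hF.apply_zero]⟩
  obtain ⟨C, hC⟩ := hF.exists_cross_term (‖a‖⁻¹ • a) (‖b‖⁻¹ • b)
    (by simp [norm_smul, ha]) (by simp [norm_smul, hb])
    (by rw [inner_smul_left_eq_smul, inner_smul_right_eq_smul, hab, smul_zero, smul_zero])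
  refine ⟨‖a‖ * ‖b‖ * C, fun s t ↦ ?_⟩
  have ha' : ‖a‖ ≠ 0 := norm_ne_zero_iff.2 ha
  have hb' : ‖b‖ ≠ 0 := norm_ne_zero_iff.2 hb
  have h := hC (s * ‖a‖) (t * ‖b‖)
  rw [smul_smul, smul_smul, mul_inv_cancel_right₀ ha', mul_inv_cancel_right₀ hb', hF.real_smul,
    hF.real_smul] at h
  rw [h]
  field

/- For `ω = c + s i` of modulus one, `a + ω² b` has the phase of `c (a + b) - s i (a - b)`, which
lies in the real span of an orthogonal pair. -/
lemma exists_phase_term (hF : IsOrthoquadratic F) (hnorm : ‖a‖ = ‖b‖) (hab : inner ℂ a b = 0) :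
    ∃ γ : ℂ, ∀ ζ : ℂ, ‖ζ‖ = 1 → F (a + ζ • b) = F a + F b + 2 * (ζ * γ).re := by
  have hpq : inner ℂ (a + b) (-Complex.I • (a - b)) = 0 := by
    simp [inner_smul_right, inner_add_left, inner_sub_right, hab, inner_eq_zero_symm.1 hab, hnorm]
  obtain ⟨D, hD⟩ := hF.exists_cross_term_of_inner_eq_zero hab
  obtain ⟨C, hC⟩ := hF.exists_cross_term_of_inner_eq_zero hpq
  have hp : F (a + b) = F a + F b + D := by simpa using hD 1 1
  have hq : F (-Complex.I • (a - b)) = F a + F b - D := by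
    rw [hF.smul_of_norm_eq_one (by simp)]
    simpa [← sub_eq_add_neg] using hD 1 (-1)
  refine ⟨⟨D / 2, -C / 4⟩, fun ζ hζ ↦ ?_⟩
  obtain ⟨ω, rfl⟩ := IsAlgClosed.exists_pow_nat_eq ζ two_pos
  have hω : ‖ω‖ = 1 := by rwa [norm_pow, pow_eq_one_iff_of_nonneg (norm_nonneg _) two_ne_zero] at hζ
  have hre : ω.re ^ 2 + ω.im ^ 2 = 1 := by
    rw [sq, sq, ← Complex.normSq_apply, Complex.normSq_eq_norm_sq, hω, one_pow]
  have hspan : a + ω ^ 2 • b = ω • (ω.re • (a + b) + ω.im • (-Complex.I • (a - b))) := by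
    have hconj : ω * (ω.re - ω.im * Complex.I) = 1 := by
      have : (ω.re - ω.im * Complex.I : ℂ) = conj ω := by apply Complex.ext <;> simp
      rw [this, Complex.mul_conj', hω, Complex.ofReal_one, one_pow]
    simp only [← Complex.coe_smul]
    match_scalars
    · linear_combination -hconj
    · linear_combination -ω * Complex.re_add_im ω
  rw [hspan, hF.smul_of_norm_eq_one hω, hC, hp, hq, sq ω]
  simp only [Complex.mul_re, Complex.mul_im]
  linear_combination (F a + F b) * hre

lemma exists_hermitian_term (hF : IsOrthoquadratic F) (hnorm : ‖a‖ = ‖b‖)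
    (hab : inner ℂ a b = 0) : ∃ γ : ℂ, ∀ x y : ℂ,
      F (x • a + y • b) = ‖x‖ ^ 2 * F a + ‖y‖ ^ 2 * F b + 2 * (conj x * y * γ).re := by
  obtain ⟨γ, hγ⟩ := hF.exists_phase_term hnorm hab
  refine ⟨γ, fun x y ↦ ?_⟩
  obtain ⟨ξ, hξ, hx⟩ := Complex.exists_norm_mul_eq_self x
  obtain ⟨η, hη, hy⟩ := Complex.exists_norm_mul_eq_self y
  have hξξ : conj ξ * ξ = 1 := by rw [Complex.conj_mul', hξ, Complex.ofReal_one, one_pow]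
  have hphase : ‖conj ξ * η‖ = 1 := by rw [norm_mul, RCLike.norm_conj, hξ, hη, one_mul]
  obtain ⟨C, hC⟩ := hF.exists_cross_term_of_inner_eq_zero (a := a) (b := (conj ξ * η) • b)
    (by rw [inner_smul_right, hab, mul_zero])
  have hcross := hC 1 1
  rw [one_smul, one_smul, hγ _ hphase, hF.smul_of_norm_eq_one hphase] at hcross
  have hfactor : x • a + y • b = ξ • (‖x‖ • a + ‖y‖ • (conj ξ * η) • b) := by
    simp only [← Complex.coe_smul]
    match_scalars
    · linear_combination -hx
    · linear_combination -hy - ‖y‖ * η * hξξ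
  have hre : (conj x * y * γ).re = ‖x‖ * ‖y‖ * (conj ξ * η * γ).re := by
    rw [← Complex.re_ofReal_mul]
    conv_lhs => rw [← hx, ← hy, map_mul, Complex.conj_ofReal]
    congr 1
    push_cast
    ring
  rw [hfactor, hF.smul_of_norm_eq_one hξ, hC, hF.smul_of_norm_eq_one hphase, hre]
  linear_combination -‖x‖ * ‖y‖ * hcross

lemma exists_real_cross_term (hF : IsOrthoquadratic F) (u v : V) : ∃ C : ℝ, ∀ s t : ℝ,
    F (s • u + t • v) = s ^ 2 * F u + t ^ 2 * F v + s * t * C := by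
  rcases eq_or_ne u 0 with rfl | hu
  · exact ⟨0, fun s t ↦ by simp [hF.real_smul, hF.apply_zero]⟩
  obtain ⟨q, w, huw, rfl⟩ : ∃ (q : ℂ) (w : V), inner ℂ u w = 0 ∧ v = q • u + w :=
    ⟨inner ℂ u v / inner ℂ u u, v - (inner ℂ u v / inner ℂ u u) • u, by
      rw [inner_sub_right, inner_smul_right, div_mul_cancel₀ _ (inner_self_ne_zero.2 hu), sub_self],
      by abel⟩
  obtain ⟨b, r, γ, rfl, hγ⟩ : ∃ (b : V) (r : ℝ) (γ : ℂ), w = r • b ∧ ∀ (x : ℂ) (y : ℝ),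
      F (x • u + (y * r) • b) = ‖x‖ ^ 2 * F u + (y * r) ^ 2 * F b
        + 2 * (y * r) * (conj x * γ).re := by
    rcases eq_or_ne w 0 with rfl | hw
    · exact ⟨0, 0, 0, by simp, fun x y ↦ by simp [hF.smul]⟩
    have hu' : ‖u‖ ≠ 0 := norm_ne_zero_iff.2 hu
    have hw' : ‖w‖ ≠ 0 := norm_ne_zero_iff.2 hw
    obtain ⟨γ, hγ⟩ := hF.exists_hermitian_term (a := u) (b := (‖u‖ / ‖w‖) • w)
      (by simp [norm_smul, hw']) (by rw [inner_smul_right_eq_smul, huw, smul_zero])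
    refine ⟨(‖u‖ / ‖w‖) • w, ‖w‖ / ‖u‖, γ, ?_, fun x y ↦ ?_⟩
    · rw [smul_smul, div_mul_div_cancel₀ hu', div_self hw', one_smul]
    · rw [← Complex.coe_smul (y * (‖w‖ / ‖u‖)), hγ, Complex.norm_real, Real.norm_eq_abs, sq_abs,
        mul_right_comm (conj x), Complex.re_mul_ofReal]
      ring
  refine ⟨2 * q.re * F u + 2 * r * γ.re, fun s t ↦ ?_⟩
  have hsplit : s • u + t • (q • u + r • b) = (s + t * q : ℂ) • u + (t * r) • b := by
    simp only [← Complex.coe_smul]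
    match_scalars <;> simp
  have hv := hγ q 1
  rw [one_mul] at hv
  rw [hsplit, hγ, hv]
  simp only [← Complex.normSq_eq_norm_sq, Complex.normSq_apply, Complex.add_re, Complex.add_im,
    Complex.mul_re, Complex.mul_im, Complex.ofReal_re, Complex.ofReal_im, Complex.conj_re,
    Complex.conj_im]
  ring

end IsOrthoquadratic

theorem exists_quadraticForm {V : Type*} [AddCommGroup V] [Module ℝ V] {F : V → ℝ}
    (hF : ∀ u v, ∃ C : ℝ, ∀ s t : ℝ, F (s • u + t • v) = s ^ 2 * F u + t ^ 2 * F v + s * t * C) :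
    ∃ Q : QuadraticForm ℝ V, ∀ v, Q v = F v := by
  choose C hC using hF
  have hpolar : ∀ u v, QuadraticMap.polar F u v = C u v := by
    intro u v
    have h := hC u v 1 1
    rw [one_smul, one_smul] at h
    rw [QuadraticMap.polar, h]
    ring
  have hparallelogram : ∀ u v, F (u + v) + F (u - v) = 2 * F u + 2 * F v := by
    intro u v
    have hplus := hC u v 1 1
    have hminus := hC u v 1 (-1)
    rw [one_smul, one_smul] at hplus
    rw [one_smul, neg_one_smul, ← sub_eq_add_neg] at hminus
    linear_combination hplus + hminus
  have hzero : F 0 = 0 := by simpa using hC 0 0 0 0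
  have hsmul : ∀ (t : ℝ) v, F (t • v) = t ^ 2 * F v := fun t v ↦ by
    simpa [hzero] using hC 0 v 0 t
  refine ⟨.ofPolar F (fun t v ↦ ?_) (fun u v w ↦ ?_) (fun t u v ↦ ?_), fun v ↦ rfl⟩
  · rw [hsmul, smul_eq_mul, sq]
  · have h₁ := hparallelogram (u + w) v
    have h₂ := hparallelogram (v + w) u
    have h₃ := hparallelogram w (u - v)
    have h₄ := hparallelogram u v
    rw [show u + w + v = u + v + w by abel] at h₁
    rw [show v + w + u = u + v + w by abel, show v + w - u = w - (u - v) by abel] at h₂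
    rw [show w + (u - v) = u + w - v by abel] at h₃
    simp only [QuadraticMap.polar]
    linarith
  · have h := hC u v t 1
    rw [one_smul] at h
    rw [hpolar u v, QuadraticMap.polar, h, hsmul, smul_eq_mul]
    ring

theorem exists_sesquilinear_of_quadraticForm {V : Type*} [AddCommGroup V] [Module ℂ V]
    (Q : QuadraticForm ℝ V) (hQ : ∀ (z : ℂ) v, Q (z • v) = ‖z‖ ^ 2 * Q v) :
    ∃ B : V →ₗ⋆[ℂ] V →ₗ[ℂ] ℂ, B.IsSymm ∧ ∀ v, B v v = Q v := by
  let R := QuadraticMap.associated (R := ℝ) Q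
  have hR : ∀ u v, R u v = R v u := QuadraticMap.associated_isSymm ℝ Q
  have hI : ∀ u v, R (Complex.I • u) (Complex.I • v) = R u v := by
    intro u v
    simp [R, QuadraticMap.associated_apply, ← smul_add, hQ]
  have hswap : ∀ u v, R (Complex.I • u) v = -R u (Complex.I • v) := by
    intro u v
    rw [← hI u, smul_smul, Complex.I_mul_I, neg_one_smul, map_neg, neg_neg]
  refine ⟨{ toFun u := Module.Dual.extendRCLike (R u), map_add' u v := ?_, map_smul' z u := ?_ },
    ⟨fun u v ↦ ?_⟩, fun v ↦ ?_⟩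
  · rw [map_add]
    exact map_add Module.Dual.extendRCLikeₗ _ _
  · ext v
    have hz (w : V) : R (z • u) w = z.re * R u w - z.im * R u (Complex.I • w) := by
      conv_lhs => rw [← Complex.re_add_im z, add_smul, mul_smul, Complex.coe_smul, Complex.coe_smul]
      simp only [map_add, map_smul, LinearMap.add_apply, LinearMap.smul_apply, smul_eq_mul, hswap]
      ring
    apply Complex.ext
    · simp [Module.Dual.extendRCLike_apply, hz]
    · simp [Module.Dual.extendRCLike_apply, hz, smul_smul, add_comm]
  · apply Complex.ext
    · simp [Module.Dual.extendRCLike_apply, hR v u]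
    · simp [Module.Dual.extendRCLike_apply, hR u (Complex.I • v), hswap]
  · have hdiag : R v v = Q v := QuadraticMap.associated_eq_self_apply ℝ Q v
    have horth : R v (Complex.I • v) = 0 := by linarith [hswap v v, hR (Complex.I • v) v]
    simp [Module.Dual.extendRCLike_apply, horth, hdiag]

theorem IsOrthoquadratic.exists_sesquilinear {V : Type*} [NormedAddCommGroup V]
    [InnerProductSpace ℂ V] {F : V → ℝ} (hF : IsOrthoquadratic F) :
    ∃ B : V →ₗ⋆[ℂ] V →ₗ[ℂ] ℂ, B.IsSymm ∧ ∀ v, B v v = F v := by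
  obtain ⟨Q, hQ⟩ := exists_quadraticForm hF.exists_real_cross_term
  simp only [← hQ]
  exact exists_sesquilinear_of_quadraticForm Q fun z v ↦ by rw [hQ, hQ, hF.smul]

end Sesquilinear

/-! ### Measures on projections -/

section RealCombination

variable {κ V : Type*} [Fintype κ] [NormedAddCommGroup V] [InnerProductSpace ℂ V] {u : κ → V}

/-- The vector with real coordinates `x` with respect to the family `u`. For an orthonormal family
this embeds `ℝ^κ` isometrically. -/
noncomputable def realCombination (u : κ → V) (x : EuclideanSpace ℝ κ) : V :=
  ∑ j, x j • u j

lemma realCombination_smul (t : ℝ) (x : EuclideanSpace ℝ κ) :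
    realCombination u (t • x) = t • realCombination u x := by
  simp [realCombination, Finset.smul_sum, mul_smul]

lemma inner_realCombination (hu : Orthonormal ℂ u) (x y : EuclideanSpace ℝ κ) :
    inner ℂ (realCombination u x) (realCombination u y) = (inner ℝ x y : ℝ) := by
  simp only [realCombination, ← Complex.coe_smul, hu.inner_sum, PiLp.inner_apply]
  simp [mul_comm]

lemma norm_realCombination (hu : Orthonormal ℂ u) (x : EuclideanSpace ℝ κ) :
    ‖realCombination u x‖ = ‖x‖ := by
  rw [norm_eq_sqrt_re_inner (𝕜 := ℂ), inner_realCombination hu, norm_eq_sqrt_real_inner]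
  rfl

end RealCombination

section Projections

open ComplexConjugate

variable {ι κ : Type*} [Fintype ι] {m : Matrix ι ι ℂ → ℝ} {A P Q : Matrix ι ι ℂ}

/-- The orthogonal projection onto the line through `v`. It is `0` for `v = 0`. -/
noncomputable def lineProj (v : EuclideanSpace ℂ ι) : Matrix ι ι ℂ :=
  ((‖v‖ ^ 2)⁻¹ : ℂ) • vecMulVec v.ofLp (star v.ofLp)

lemma lineProj_of_norm_eq_one {v : EuclideanSpace ℂ ι} (hv : ‖v‖ = 1) :
    lineProj v = vecMulVec v.ofLp (star v.ofLp) := by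
  simp [lineProj, hv]

lemma star_dotProduct_eq_inner (u v : EuclideanSpace ℂ ι) :
    star u.ofLp ⬝ᵥ v.ofLp = inner ℂ u v := by
  rw [EuclideanSpace.inner_eq_star_dotProduct, dotProduct_comm]

lemma star_dotProduct_self (v : EuclideanSpace ℂ ι) : star v.ofLp ⬝ᵥ v.ofLp = (‖v‖ : ℂ) ^ 2 := by
  rw [star_dotProduct_eq_inner, inner_self_eq_norm_sq_to_K]
  rfl

lemma lineProj_mul_lineProj {u v : EuclideanSpace ℂ ι} (h : inner ℂ u v = 0) :
    lineProj u * lineProj v = 0 := by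
  simp [lineProj, vecMulVec_mul_vecMulVec, star_dotProduct_eq_inner, h]

lemma isProjection_lineProj (v : EuclideanSpace ℂ ι) : IsProjection (lineProj v) := by
  constructor
  · simp [lineProj, conjTranspose_smul, conjTranspose_vecMulVec]
  · rcases eq_or_ne v 0 with rfl | hv
    · simp [lineProj]
    have hv' : (‖v‖ : ℂ) ^ 2 ≠ 0 := by simpa using hv
    rw [lineProj, smul_mul_smul_comm, vecMulVec_mul_vecMulVec, star_dotProduct_self,
      vecMulVec_smul, smul_smul, inv_mul_cancel_right₀ hv']

lemma lineProj_smul {z : ℂ} (hz : z ≠ 0) (v : EuclideanSpace ℂ ι) :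
    lineProj (z • v) = lineProj v := by
  have hz' : (‖z‖ : ℂ) ^ 2 ≠ 0 := by simpa using hz
  have hscalar : ((‖z • v‖ ^ 2)⁻¹ : ℂ) * (z * conj z) = ((‖v‖ ^ 2)⁻¹ : ℂ) := by
    rw [norm_smul, Complex.mul_conj', Complex.ofReal_mul, mul_pow, mul_inv, mul_comm,
      mul_inv_cancel_left₀ hz']
  rw [lineProj, lineProj, ← hscalar, mul_smul]
  congr 1
  ext k l
  simp only [WithLp.ofLp_smul, star_smul, Matrix.smul_apply, vecMulVec_apply, Pi.smul_apply,
    Pi.star_apply, smul_eq_mul, Complex.star_def]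
  ring

lemma trace_mul_lineProj (A : Matrix ι ι ℂ) (v : EuclideanSpace ℂ ι) :
    (A * lineProj v).trace = (star v.ofLp ⬝ᵥ A *ᵥ v.ofLp) / (‖v‖ : ℂ) ^ 2 := by
  rw [lineProj, Matrix.mul_smul, trace_smul, mul_vecMulVec, trace_vecMulVec, dotProduct_comm,
    smul_eq_mul, mul_comm, div_eq_mul_inv]

lemma isHermitian_eq_sum_eigenvalues_smul_lineProj [DecidableEq ι] (hA : A.IsHermitian) :
    A = ∑ i, hA.eigenvalues i • lineProj (hA.eigenvectorBasis i) := by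
  apply (toEuclideanLin (𝕜 := ℂ)).injective
  refine hA.eigenvectorBasis.toBasis.ext fun j ↦ ?_
  ext k
  suffices A *ᵥ hA.eigenvectorBasis j =
      (∑ i, hA.eigenvalues i • lineProj (hA.eigenvectorBasis i)) *ᵥ hA.eigenvectorBasis j by
    exact congrFun this k
  rw [hA.mulVec_eigenvectorBasis, sum_mulVec, Finset.sum_eq_single j]
  · rw [lineProj_of_norm_eq_one (OrthonormalBasis.norm_eq_one _ _), smul_mulVec,
      vecMulVec_mulVec, star_dotProduct_self]
    simp
  · intro i _ hij
    simp [lineProj, smul_mulVec, vecMulVec_mulVec, star_dotProduct_eq_inner,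
      hij]
  · simp

lemma exists_eq_sum_lineProj (hP : IsProjection P) :
    ∃ (b : OrthonormalBasis ι ℂ (EuclideanSpace ℂ ι)) (s : Finset ι),
      P = ∑ i ∈ s, lineProj (b i) := by
  classical
  have hH : P.IsHermitian := hP.1
  have hzero_one (i : ι) : hH.eigenvalues i = 0 ∨ hH.eigenvalues i = 1 :=
    IsIdempotentElem.spectrum_subset ℝ hP.2 (hH.eigenvalues_mem_spectrum_real i)
  refine ⟨hH.eigenvectorBasis, Finset.univ.filter (hH.eigenvalues · = 1), ?_⟩
  conv_lhs => rw [isHermitian_eq_sum_eigenvalues_smul_lineProj hH]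
  rw [Finset.sum_filter]
  refine Finset.sum_congr rfl fun i _ ↦ ?_
  rcases hzero_one i with h | h <;> simp [h]

lemma isProjection_zero : IsProjection (0 : Matrix ι ι ℂ) := ⟨conjTranspose_zero, mul_zero 0⟩

lemma isProjection_one [DecidableEq ι] : IsProjection (1 : Matrix ι ι ℂ) :=
  ⟨conjTranspose_one, mul_one 1⟩

lemma isProjection_add (hP : IsProjection P) (hQ : IsProjection Q) (h : P * Q = 0) :
    IsProjection (P + Q) := by
  have h' : Q * P = 0 := by
    simpa [hP.1, hQ.1] using congrArg conjTranspose h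
  refine ⟨by rw [conjTranspose_add, hP.1, hQ.1], ?_⟩
  rw [add_mul, mul_add, mul_add, hP.2, hQ.2, h, h', add_zero, zero_add]

lemma isProjection_sum {p : κ → Matrix ι ι ℂ} (hp : ∀ i, IsProjection (p i))
    (horth : Pairwise fun i j ↦ p i * p j = 0) (s : Finset κ) :
    IsProjection (∑ i ∈ s, p i) := by
  induction s using Finset.cons_induction with
  | empty => exact isProjection_zero
  | cons i s hi ih =>
    rw [Finset.sum_cons]
    refine isProjection_add (hp i) ih ?_
    rw [Finset.mul_sum]
    exact Finset.sum_eq_zero fun j hj ↦ horth (ne_of_mem_of_not_mem hj hi).symm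

/-- Finite additivity of a function on orthogonal projections; its values at other matrices are
irrelevant. -/
def IsProjectionAdditive (m : Matrix ι ι ℂ → ℝ) : Prop :=
  ∀ P Q, IsProjection P → IsProjection Q → P * Q = 0 → m (P + Q) = m P + m Q

namespace IsProjectionAdditive

lemma map_zero (hm : IsProjectionAdditive m) : m 0 = 0 := by
  simpa using hm 0 0 isProjection_zero isProjection_zero (mul_zero 0)

lemma map_sum (hm : IsProjectionAdditive m) {p : κ → Matrix ι ι ℂ}
    (hp : ∀ i, IsProjection (p i)) (horth : Pairwise fun i j ↦ p i * p j = 0) (s : Finset κ) :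
    m (∑ i ∈ s, p i) = ∑ i ∈ s, m (p i) := by
  induction s using Finset.cons_induction with
  | empty => exact hm.map_zero
  | cons i s hi ih =>
    rw [Finset.sum_cons, Finset.sum_cons, ← ih]
    refine hm _ _ (hp i) (isProjection_sum hp horth s) ?_
    rw [Finset.mul_sum]
    exact Finset.sum_eq_zero fun j hj ↦ horth (ne_of_mem_of_not_mem hj hi).symm

lemma map_sum_lineProj (hm : IsProjectionAdditive m) {u : κ → EuclideanSpace ℂ ι}
    (hu : Pairwise fun i j ↦ inner ℂ (u i) (u j) = 0) (s : Finset κ) :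
    m (∑ i ∈ s, lineProj (u i)) = ∑ i ∈ s, m (lineProj (u i)) :=
  hm.map_sum (fun _ ↦ isProjection_lineProj _) (fun _ _ hij ↦ lineProj_mul_lineProj (hu hij)) s

end IsProjectionAdditive

lemma sum_lineProj_realCombination [Fintype κ] {u : κ → EuclideanSpace ℂ ι}
    (hu : Orthonormal ℂ u) (b : OrthonormalBasis κ ℝ (EuclideanSpace ℝ κ)) :
    ∑ i, lineProj (realCombination u (b i)) = ∑ j, lineProj (u j) := by
  classical
  have hparseval (j k : κ) : ∑ i, b i j * b i k = if j = k then 1 else 0 := by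
    simpa [EuclideanSpace.inner_single_left, EuclideanSpace.inner_single_right, eq_comm,
      Pi.single_apply] using
      b.sum_inner_mul_inner (EuclideanSpace.single j 1) (EuclideanSpace.single k 1)
  have hexpand (i : κ) : lineProj (realCombination u (b i)) =
      ∑ j, ∑ k, (b i j * b i k) • vecMulVec (u j).ofLp (star (u k).ofLp) := by
    rw [lineProj_of_norm_eq_one (by simp [norm_realCombination hu])]
    ext
    simp [realCombination, vecMulVec_apply, Finset.sum_mul_sum, Matrix.sum_apply, mul_mul_mul_comm]
  calc ∑ i, lineProj (realCombination u (b i))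
    _ = ∑ j, ∑ k, (∑ i, b i j * b i k) • vecMulVec (u j).ofLp (star (u k).ofLp) := by
      simp_rw [hexpand, Finset.sum_smul]
      rw [Finset.sum_comm]
      exact Finset.sum_congr rfl fun j _ ↦ Finset.sum_comm
    _ = ∑ j, lineProj (u j) := by
      simp [hparseval, lineProj_of_norm_eq_one (hu.1 _)]

lemma IsProjectionAdditive.isFrameFunction (hm : IsProjectionAdditive m)
    {u : Fin 3 → EuclideanSpace ℂ ι} (hu : Orthonormal ℂ u) :
    IsFrameFunction (fun x ↦ m (lineProj (realCombination u x))) (m (∑ j, lineProj (u j))) where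
  smul t ht x := by
    rw [realCombination_smul, ← Complex.coe_smul, lineProj_smul (Complex.ofReal_ne_zero.2 ht)]
  sum_orthonormalBasis b := by
    rw [← sum_lineProj_realCombination hu b, hm.map_sum_lineProj]
    intro i j hij
    rw [inner_realCombination hu, b.inner_eq_zero hij, Complex.ofReal_zero]

lemma IsProjectionAdditive.isOrthoquadratic (hm : IsProjectionAdditive m) {k : ℝ}
    (hk : ∀ P, IsProjection P → k ≤ m P) (hι : 3 ≤ Fintype.card ι) :
    IsOrthoquadratic fun v : EuclideanSpace ℂ ι ↦ ‖v‖ ^ 2 * m (lineProj v) where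
  smul z v := by
    rcases eq_or_ne z 0 with rfl | hz
    · simp
    · rw [lineProj_smul hz, norm_smul, mul_pow, mul_assoc]
  exists_cross_term a b ha hb hab := by
    obtain ⟨c, hc, hac, hbc⟩ := exists_norm_eq_one_inner_eq_zero (𝕜 := ℂ) (by simpa) a b
    have hu : Orthonormal ℂ ![a, b, c] := by
      simp [orthonormal_vecCons_iff, ha, hb, hc, hab, hac, hbc]
    obtain ⟨A, hA⟩ := (hm.isFrameFunction hu).exists_linearMap
      fun v _ ↦ hk _ (isProjection_lineProj _)
    let e₁ : ℝ³ := !₂[1, 0, 0]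
    let e₂ : ℝ³ := !₂[0, 1, 0]
    have hform (s t : ℝ) : ‖s • a + t • b‖ ^ 2 * m (lineProj (s • a + t • b)) =
        inner ℝ (s • e₁ + t • e₂) (A (s • e₁ + t • e₂)) := by
      have hst : realCombination ![a, b, c] (s • e₁ + t • e₂) = s • a + t • b := by
        simp [realCombination, Fin.sum_univ_three, e₁, e₂]
      rw [← hA, hst, ← hst, norm_realCombination hu]
    have ha' := hform 1 0
    have hb' := hform 0 1
    simp only [one_smul, zero_smul, add_zero, zero_add] at ha' hb'
    refine ⟨inner ℝ e₁ (A e₂) + inner ℝ e₂ (A e₁), fun s t ↦ ?_⟩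
    rw [hform, ha', hb']
    simp only [map_add, map_smul, inner_add_left, inner_add_right, real_inner_smul_left,
      real_inner_smul_right]
    ring

lemma exists_isHermitian_star_dotProduct_mulVec
    {B : EuclideanSpace ℂ ι →ₗ⋆[ℂ] EuclideanSpace ℂ ι →ₗ[ℂ] ℂ} (hB : B.IsSymm) :
    ∃ A : Matrix ι ι ℂ, A.IsHermitian ∧ ∀ v, star v.ofLp ⬝ᵥ A *ᵥ v.ofLp = B v v := by
  classical
  let e := (EuclideanSpace.basisFun ι ℂ).toBasis
  exact ⟨LinearMap.toMatrix₂ e e B, (B.isSymm_iff_isHermitian_toMatrix e).1 hB, fun v ↦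
    (apply_eq_star_dotProduct_toMatrix₂_mulVec e v v).symm⟩

lemma eq_of_re_trace_mul_lineProj_eq {A' : Matrix ι ι ℂ} (hA : A.IsHermitian)
    (hA' : A'.IsHermitian)
    (h : ∀ v, (A * lineProj v).trace.re = (A' * lineProj v).trace.re) : A = A' := by
  by_contra hne
  obtain ⟨x, t, ht, hx, hxt⟩ := (hA.sub hA').exists_eigenvector_of_ne_zero (sub_ne_zero.2 hne)
  let v : EuclideanSpace ℂ ι := WithLp.toLp 2 x
  have hv : (‖v‖ : ℂ) ^ 2 ≠ 0 := by simpa [v] using hx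
  have htrace : ((A - A') * lineProj v).trace = t := by
    rw [trace_mul_lineProj, hxt, dotProduct_smul, star_dotProduct_self, Complex.real_smul,
      mul_div_cancel_right₀ _ hv]
  apply ht
  rw [← Complex.ofReal_re t, ← htrace, sub_mul, trace_sub, Complex.sub_re, h, sub_self]

lemma isDensityMatrix_of_re_trace_mul_nonneg [DecidableEq ι] (hA : A.IsHermitian)
    (hnonneg : ∀ P, IsProjection P → 0 ≤ (A * P).trace.re) (htrace : A.trace.re = 1) :
    IsDensityMatrix A := by
  refine ⟨.of_dotProduct_mulVec_nonneg hA fun x ↦ ?_, ?_⟩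
  · rw [Complex.nonneg_iff]
    refine ⟨?_, (hA.im_star_dotProduct_mulVec_self x).symm⟩
    rcases eq_or_ne x 0 with rfl | hx
    · simp
    have hv : 0 < ‖WithLp.toLp 2 x‖ ^ 2 := pow_pos (norm_pos_iff.2 (by simpa using hx)) 2
    have h := hnonneg _ (isProjection_lineProj (WithLp.toLp 2 x))
    rwa [trace_mul_lineProj, ← Complex.ofReal_pow, Complex.div_ofReal_re,
      le_div_iff₀ hv, zero_mul] at h
  · have hstar : conj A.trace = A.trace := by
      rw [starRingEnd_apply, ← trace_conjTranspose, hA.eq]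
    rw [← Complex.conj_eq_iff_re.1 hstar, htrace, Complex.ofReal_one]

theorem IsProjectionAdditive.exists_isHermitian (hm : IsProjectionAdditive m) {k : ℝ}
    (hk : ∀ P, IsProjection P → k ≤ m P) (hι : 3 ≤ Fintype.card ι) :
    ∃ A : Matrix ι ι ℂ, A.IsHermitian ∧ ∀ P, IsProjection P → m P = ((A * P).trace).re := by
  classical
  obtain ⟨B, hB, hdiag⟩ := (hm.isOrthoquadratic hk hι).exists_sesquilinear
  obtain ⟨A, hA, hform⟩ := exists_isHermitian_star_dotProduct_mulVec hB
  refine ⟨A, hA, fun P hP ↦ ?_⟩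
  obtain ⟨b, s, rfl⟩ := exists_eq_sum_lineProj hP
  have hline (i : ι) : (A * lineProj (b i)).trace = m (lineProj (b i)) := by
    rw [trace_mul_lineProj, hform, hdiag]
    simp
  rw [hm.map_sum_lineProj b.orthonormal.2, Finset.mul_sum, trace_sum, Complex.re_sum]
  simp [hline]

end Projections

end Gleason

open Gleason in
theorem gleason_finite_dimensional_general {ι : Type*} [Fintype ι] (hι : 3 ≤ Fintype.card ι)
    {m : Matrix ι ι ℂ → ℝ} {k : ℝ} (hk : ∀ P, IsProjection P → k ≤ m P)
    (hadd : ∀ P Q, IsProjection P → IsProjection Q → P * Q = 0 → m (P + Q) = m P + m Q) :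
    ∃! A : Matrix ι ι ℂ, A.IsHermitian ∧
      ∀ P, IsProjection P → m P = ((A * P).trace).re := by
  obtain ⟨A, hA, hm⟩ := IsProjectionAdditive.exists_isHermitian hadd hk hι
  refine ⟨A, ⟨hA, hm⟩, fun A' ⟨hA', hm'⟩ ↦ eq_of_re_trace_mul_lineProj_eq hA' hA fun v ↦ ?_⟩
  rw [← hm _ (isProjection_lineProj v), ← hm' _ (isProjection_lineProj v)]

open Gleason in
/-- Gleason's theorem for `M_n(ℂ)`, `n ≥ 3`: every finitely
additive probability measure on the orthogonal projections extends uniquely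
to a density matrix, i.e. there is a unique density matrix `ρ` with
`m(P) = Tr(ρ P)` for all projections `P`. -/
theorem gleason_finite_dimensional (n : ℕ) (hn : 3 ≤ n)
    (m : Matrix (Fin n) (Fin n) ℂ → ℝ)
    (hm01 : ∀ P, IsProjection P → m P ∈ Set.Icc (0 : ℝ) 1)
    (hmI : m 1 = 1)
    (hadd : ∀ P Q, IsProjection P → IsProjection Q → P * Q = 0 →
      m (P + Q) = m P + m Q) :
    ∃! ρ : Matrix (Fin n) (Fin n) ℂ, IsDensityMatrix ρ ∧
      ∀ P, IsProjection P → m P = ((ρ * P).trace).re := by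
  have hm0 (P) (hP : IsProjection P) : 0 ≤ m P := (hm01 P hP).1
  obtain ⟨ρ, ⟨hρ, hρm⟩, huniq⟩ := gleason_finite_dimensional_general (by simpa) hm0 hadd
  have hdensity : IsDensityMatrix ρ := isDensityMatrix_of_re_trace_mul_nonneg hρ
    (fun P hP ↦ hρm P hP ▸ hm0 P hP) (by rw [← mul_one ρ, ← hρm 1 isProjection_one, hmI])
  exact ⟨ρ, ⟨hdensity, hρm⟩, fun σ hσ ↦ huniq σ ⟨hσ.1.1.isHermitian, hσ.2⟩⟩
end

section
/- Context-independence of measures on the spectral presheaf: suppose that for every commutative unital star-subalgebra V of M_n(ℂ) we are given a function μ_V from the set of orthogonal projections belonging to V to [0,1] such that (i) μ_V(I) = 1; (ii) μ_V(P + Q) = μ_V(P) + μ_V(Q) whenever P, Q ∈ V are orthogonal projections with PQ = 0; and (iii) whenever V' ⊆ V are commutative unital star-subalgebras and P is an orthogonal projection in V', one has μ_{V'}(P) ≥ μ_V(P). Then the value μ_V(P) is independent of the context: for any orthogonal projection P and any two commutative unital star-subalgebras V and W both containing P, μ_V(P) = μ_W(P). -/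
/-!
Pass from a context `V` to a smaller one `U` containing `P`. Antitonicity bounds both `μ V P` by
`μ U P` and `μ V (1 - P)` by `μ U (1 - P)`. The left-hand sides and the right-hand sides have the
same sum, namely the total mass, so neither inequality can be strict. Any two contexts containing
`P` have their intersection as a common smaller context.
-/

open Matrix

/-- A star-subalgebra is commutative if all its elements commute. -/
def IsCommSub {n : ℕ} (V : StarSubalgebra ℂ (Matrix (Fin n) (Fin n) ℂ)) : Prop :=
  ∀ a ∈ V, ∀ b ∈ V, a * b = b * a

section StarAlgebra

variable {R A M : Type*} [CommRing R] [StarRing R] [Ring A] [StarRing A] [Algebra R A]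
  [StarModule R A]

/-- A measure of total mass `m` on a family `C` of contexts: each `V ∈ C` carries a finitely
additive function on its projections, and restricting to a smaller context can only increase the
values, as for measures on the spectral presheaf. Each `μ V` is encoded as a function on all of `A`,
whose values outside the projections of `V` are junk. -/
structure IsContextualMeasure [Add M] [LE M] (C : Set (StarSubalgebra R A)) (m : M)
    (μ : StarSubalgebra R A → A → M) : Prop where
  map_one : ∀ V ∈ C, μ V 1 = m
  map_add : ∀ V ∈ C, ∀ P Q, IsStarProjection P → IsStarProjection Q → P ∈ V → Q ∈ V →
    P * Q = 0 → μ V (P + Q) = μ V P + μ V Q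
  antitone : ∀ V ∈ C, ∀ U ∈ C, U ≤ V → ∀ P, IsStarProjection P → P ∈ U → μ V P ≤ μ U P

variable {C : Set (StarSubalgebra R A)} {m : M} {μ : StarSubalgebra R A → A → M}
  {U V W : StarSubalgebra R A} {P : A}

namespace IsContextualMeasure

theorem map_add_map_one_sub [Add M] [LE M] (hμ : IsContextualMeasure C m μ) (hV : V ∈ C)
    (hP : IsStarProjection P) (hPV : P ∈ V) : μ V P + μ V (1 - P) = m := by
  rw [← hμ.map_add V hV P (1 - P) hP hP.one_sub hPV (sub_mem (one_mem V) hPV)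
    hP.mul_one_sub_self, add_sub_cancel, hμ.map_one V hV]

variable [Add M] [PartialOrder M] [AddLeftStrictMono M] [AddRightStrictMono M]

theorem eq_of_le (hμ : IsContextualMeasure C m μ) (hV : V ∈ C) (hU : U ∈ C) (hUV : U ≤ V)
    (hP : IsStarProjection P) (hPU : P ∈ U) : μ V P = μ U P := by
  have le_self : μ V P ≤ μ U P := hμ.antitone V hV U hU hUV P hP hPU
  have le_compl : μ V (1 - P) ≤ μ U (1 - P) :=
    hμ.antitone V hV U hU hUV (1 - P) hP.one_sub (sub_mem (one_mem U) hPU)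
  have sum_eq : μ V P + μ V (1 - P) = μ U P + μ U (1 - P) :=
    (hμ.map_add_map_one_sub hV hP (hUV hPU)).trans (hμ.map_add_map_one_sub hU hP hPU).symm
  exact ((add_eq_add_iff_eq_and_eq le_self le_compl).mp sum_eq).1

end IsContextualMeasure

theorem measure_context_independent_general [Add M] [PartialOrder M] [AddLeftStrictMono M]
    [AddRightStrictMono M] (hC : InfClosed C) (hμ : IsContextualMeasure C m μ)
    (hP : IsStarProjection P) (hV : V ∈ C) (hW : W ∈ C) (hPV : P ∈ V) (hPW : P ∈ W) :
    μ V P = μ W P :=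
  have hVW : V ⊓ W ∈ C := hC hV hW
  have hPVW : P ∈ V ⊓ W := ⟨hPV, hPW⟩
  calc
    μ V P = μ (V ⊓ W) P := hμ.eq_of_le hV hVW inf_le_left hP hPVW
    _ = μ W P := (hμ.eq_of_le hW hVW inf_le_right hP hPVW).symm

end StarAlgebra

theorem isProjection_iff_isStarProjection {ι : Type*} [Fintype ι] {P : Matrix ι ι ℂ} :
    IsProjection P ↔ IsStarProjection P :=
  and_comm.trans (isStarProjection_iff P).symm

theorem infClosed_setOf_isCommSub {n : ℕ} :
    InfClosed {V : StarSubalgebra ℂ (Matrix (Fin n) (Fin n) ℂ) | IsCommSub V} :=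
  fun _ hV _ _ a ha b hb ↦ hV a ha.1 b hb.1

/-- context-independence of measures on the spectral presheaf:
if a family `μ_V` (indexed by commutative unital star-subalgebras `V` of
`M_n(ℂ)`, each defined on the projections of `V` with values in `[0,1]`)
satisfies normalisation, additivity on orthogonal projections, and
antitonicity under context inclusion, then `μ_V(P)` does not depend on the
context `V` containing `P`. -/
theorem measure_context_independent (n : ℕ)
    (μ : StarSubalgebra ℂ (Matrix (Fin n) (Fin n) ℂ) →
      Matrix (Fin n) (Fin n) ℂ → ℝ)
    (h01 : ∀ V, IsCommSub V → ∀ P, IsProjection P → P ∈ V →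
      μ V P ∈ Set.Icc (0 : ℝ) 1)
    (hI : ∀ V, IsCommSub V → μ V 1 = 1)
    (hadd : ∀ V, IsCommSub V → ∀ P Q, IsProjection P → IsProjection Q →
      P ∈ V → Q ∈ V → P * Q = 0 → μ V (P + Q) = μ V P + μ V Q)
    (hmono : ∀ V V', IsCommSub V → IsCommSub V' → V' ≤ V →
      ∀ P, IsProjection P → P ∈ V' → μ V P ≤ μ V' P) :
    ∀ P, IsProjection P → ∀ V W, IsCommSub V → IsCommSub W →
      P ∈ V → P ∈ W → μ V P = μ W P := by
  simp only [isProjection_iff_isStarProjection] at hadd hmono ⊢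
  exact fun P hP V W hV hW ↦ measure_context_independent_general infClosed_setOf_isCommSub
    ⟨hI, hadd, fun V hV U hU ↦ hmono V U hV hU⟩ hP hV hW
end
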